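/- arXiv:2605.03681 — 7 statements merged into one kernel-verified Lean document; each statement's English description precedes it below -/
import Mathlib

section
/- Let (X,d) be a compact metric space of negative type. Then the similarity form is positive definite on signed measures: for every finite signed Borel measure μ on X one has ⟨μ,μ⟩_W = ∬ e^{−d(x,y)} dμ(x) dμ(y) ≥ 0, and ⟨μ,μ⟩_W = 0 implies μ = 0. -/
open MeasureTheory Real

/-- Integral of a function against a finite signed Borel measure,
via the Jordan decomposition. -/
noncomputable def sInt {X : Type*} [MeasurableSpace X]
    (μ : SignedMeasure X) (f : X → ℝ) : ℝ :=
  (∫ x, f x ∂μ.toJordanDecomposition.posPart) -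
  (∫ x, f x ∂μ.toJordanDecomposition.negPart)

/-- The similarity form ⟨μ,ν⟩_W = ∬ e^{-d(x,y)} dμ(x) dν(y). -/
noncomputable def simForm {X : Type*} [MetricSpace X] [MeasurableSpace X]
    (μ ν : SignedMeasure X) : ℝ :=
  sInt μ (fun x => sInt ν (fun y => Real.exp (-dist x y)))

/-!
The Gaussian kernel `exp (-‖a - b‖ ^ 2)` of an inner product space factors as
`exp (-‖a‖ ^ 2) * exp (2 * ⟪a, b⟫) * exp (-‖b‖ ^ 2)`. The middle factor is positive semidefinite by
the Schur product theorem applied to the exponential series, so the Gaussian kernel has a feature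
map `F` into a Hilbert space. For `φ` an isometric embedding of `(X, √d)`, the similarity form is
therefore `⟨μ, μ⟩_W = ‖∫ F (φ x) dμ‖ ^ 2 ≥ 0`.

If this vanishes, pairing the mean of `F ∘ φ` with `F a` gives `∫ exp (-‖φ x - a‖ ^ 2) dμ = 0` for
every vector `a`. Up to a factor depending only on `a`, these integrals are the Laplace transform of
the push-forward of `μ` weighted by `exp (-‖·‖ ^ 2)`. It is entire along each line, hence determines
the characteristic function, and with it the weighted measure and `μ`.
-/

universe u v

section Kernel

open scoped ComplexOrder

variable {ι 𝕜 : Type*} [RCLike 𝕜] {A : Matrix ι ι 𝕜}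

theorem posSemidef_map_pow (hA : A.PosSemidef) (n : ℕ) : (A.map (· ^ n)).PosSemidef := by
  induction n with
  | zero =>
    refine ⟨by ext; simp, fun c ↦ ?_⟩
    have hsum : (c.sum fun i ci ↦ c.sum fun j cj ↦ star ci * A.map (· ^ 0) i j * cj) =
        star (c.sum fun _ ci ↦ ci) * c.sum fun _ ci ↦ ci := by
      simp [Finsupp.sum, Finset.sum_mul_sum]
    exact hsum ▸ star_mul_self_nonneg _
  | succ n ih =>
    have hsucc : A.map (· ^ (n + 1)) = (A.map (· ^ n)).hadamard A := by
      ext i j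
      simp [pow_succ]
    exact hsucc ▸ ih.hadamard hA

theorem posSemidef_map_exp (hA : A.PosSemidef) : (A.map NormedSpace.exp).PosSemidef := by
  have hexp (z : 𝕜) : HasSum (fun n : ℕ ↦ (n.factorial : 𝕜)⁻¹ * z ^ n) (NormedSpace.exp z) := by
    simpa only [smul_eq_mul] using NormedSpace.exp_series_hasSum_exp' (𝕂 := 𝕜) z
  refine ⟨by ext i j; simp [← hA.isHermitian.apply i j, NormedSpace.star_exp], fun c ↦ ?_⟩
  have hform : HasSum
      (fun n : ℕ ↦ (n.factorial : 𝕜)⁻¹ *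
        c.sum fun i ci ↦ c.sum fun j cj ↦ star ci * A.map (· ^ n) i j * cj)
      (c.sum fun i ci ↦ c.sum fun j cj ↦ star ci * A.map NormedSpace.exp i j * cj) := by
    simp only [Finsupp.sum, Finset.mul_sum]
    refine hasSum_sum fun i _ ↦ hasSum_sum fun j _ ↦ ?_
    refine (((hexp (A i j)).mul_left (star (c i))).mul_right (c j)).congr_fun fun n ↦ ?_
    simp only [Matrix.map_apply]
    ring
  exact hform.nonneg fun n ↦ mul_nonneg (by positivity) ((posSemidef_map_pow hA n).2 c)

-- `Matrix.posSemidef_gram` only covers finite index types.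
theorem posSemidef_gram {E : Type*} [NormedAddCommGroup E] [InnerProductSpace 𝕜 E]
    (F : ι → E) : (Matrix.gram 𝕜 F).PosSemidef := by
  refine ⟨Matrix.isHermitian_gram 𝕜 F, fun c ↦ ?_⟩
  have hsum : (c.sum fun i ci ↦ c.sum fun j cj ↦ star ci * Matrix.gram 𝕜 F i j * cj) =
      inner 𝕜 (c.sum fun i ci ↦ ci • F i) (c.sum fun i ci ↦ ci • F i) := by
    simp only [Finsupp.sum, sum_inner, inner_sum, inner_smul_left, inner_smul_right,
      Matrix.gram_apply, RCLike.star_def, Finset.mul_sum]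
    rw [Finset.sum_comm]
    exact Finset.sum_congr rfl fun i _ ↦ Finset.sum_congr rfl fun j _ ↦ by ring
  rw [hsum, inner_self_eq_norm_sq_to_K]
  positivity

theorem exists_inner_eq_of_posSemidef {ι : Type u} {𝕜 : Type v} [RCLike 𝕜] {A : Matrix ι ι 𝕜}
    (hA : A.PosSemidef) :
    ∃ (E : Type (max u v)) (_ : NormedAddCommGroup E) (_ : InnerProductSpace 𝕜 E)
      (_ : CompleteSpace E) (F : ι → E), ∀ i j, inner 𝕜 (F i) (F j) = A i j := by
  let K : Matrix ι ι (𝕜 →L[𝕜] 𝕜) := A.map fun z ↦ z • ContinuousLinearMap.id 𝕜 𝕜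
  have hherm : K.IsHermitian := by
    ext i j
    simp [K, ContinuousLinearMap.star_eq_adjoint, ContinuousLinearMap.adjoint_id,
      ← hA.isHermitian.apply i j]
  have hK : Fact K.PosSemidef := by
    have htfae := (RKHS.posSemidef_tfae (K := K)).out 0 2
    refine ⟨htfae.mpr ⟨hherm, fun c ↦ ?_⟩⟩
    refine (RCLike.nonneg_iff.1 (hA.2 c)).1.trans_eq (congrArg RCLike.re ?_)
    refine Finset.sum_congr rfl fun i _ ↦ Finset.sum_congr rfl fun j _ ↦ ?_
    simp only [K, Matrix.map_apply, ← hA.isHermitian.apply j i, RCLike.star_def, smul_apply,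
      ContinuousLinearMap.id_apply, smul_eq_mul, RCLike.inner_apply, map_mul,
      RingHomCompTriple.comp_apply, RingHom.id_apply]
    ring
  refine ⟨RKHS.OfKernel K, inferInstance, inferInstance, inferInstance,
    fun i ↦ RKHS.kerFun (RKHS.OfKernel K) i 1, fun i j ↦ ?_⟩
  rw [← RKHS.kernel_inner, RKHS.OfKernel.kernel_ofKernel]
  simpa [K] using hA.isHermitian.apply i j

theorem continuous_of_continuous_inner {T E : Type*} [TopologicalSpace T]
    [NormedAddCommGroup E] [InnerProductSpace 𝕜 E] {F : T → E}
    (hF : Continuous fun p : T × T ↦ inner 𝕜 (F p.1) (F p.2)) : Continuous F := by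
  refine continuous_iff_continuousAt.2 fun t ↦ tendsto_iff_norm_sub_tendsto_zero.2 ?_
  have hnorm (s : T) : ‖F s - F t‖ = √(RCLike.re
      (inner 𝕜 (F s) (F s) - inner 𝕜 (F s) (F t) - inner 𝕜 (F t) (F s) + inner 𝕜 (F t) (F t))) := by
    rw [norm_eq_sqrt_re_inner (𝕜 := 𝕜), inner_sub_sub_self]
  have hdiag : Continuous fun s ↦ inner 𝕜 (F s) (F s) :=
    hF.comp (continuous_id.prodMk continuous_id)
  have hleft : Continuous fun s ↦ inner 𝕜 (F s) (F t) := hF.comp (.prodMk_left t)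
  have hright : Continuous fun s ↦ inner 𝕜 (F t) (F s) := hF.comp (.prodMk_right t)
  have hcont : Continuous fun s ↦ ‖F s - F t‖ := by
    simp only [hnorm]
    fun_prop
  simpa using hcont.tendsto t

theorem exists_inner_eq_exp_neg_norm_sub_sq (H : Type u) [NormedAddCommGroup H]
    [InnerProductSpace ℝ H] :
    ∃ (E : Type u) (_ : NormedAddCommGroup E) (_ : InnerProductSpace ℝ E) (_ : CompleteSpace E)
      (F : H → E), ∀ a b, inner ℝ (F a) (F b) = exp (-‖a - b‖ ^ 2) := by
  have hA : ((2 : ℝ) • Matrix.gram ℝ (id : H → H)).PosSemidef :=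
    (posSemidef_gram id).smul zero_le_two
  obtain ⟨E, _, _, _, Ψ, hΨ⟩ := exists_inner_eq_of_posSemidef (posSemidef_map_exp hA)
  refine ⟨E, inferInstance, inferInstance, inferInstance, fun a ↦ exp (-‖a‖ ^ 2) • Ψ a,
    fun a b ↦ ?_⟩
  simp only [real_inner_smul_left, real_inner_smul_right, hΨ, Matrix.map_apply, Matrix.smul_apply,
    Matrix.gram_apply, id_eq, smul_eq_mul, ← Real.exp_eq_exp_ℝ, ← Real.exp_add, norm_sub_sq_real]
  ring_nf

end Kernel

section SignedIntegral

variable {X E : Type*} [MeasurableSpace X] [NormedAddCommGroup E]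

theorem integrable_posPart_of_integrable_variation {μ : SignedMeasure X} {f : X → E}
    (hf : Integrable f μ.variation) : Integrable f μ.toJordanDecomposition.posPart := by
  rw [← SignedMeasure.totalVariation_eq_variation] at hf
  exact hf.left_of_add_measure

theorem integrable_negPart_of_integrable_variation {μ : SignedMeasure X} {f : X → E}
    (hf : Integrable f μ.variation) : Integrable f μ.toJordanDecomposition.negPart := by
  rw [← SignedMeasure.totalVariation_eq_variation] at hf
  exact hf.right_of_add_measure

theorem integral_eq_integral_posPart_sub_integral_negPart [NormedSpace ℝ E]
    {μ : SignedMeasure X} {f : X → E} (hf : Integrable f μ.variation) :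
    ∫ᵛ x, f x ∂<•μ = (∫ x, f x ∂μ.toJordanDecomposition.posPart) -
      ∫ x, f x ∂μ.toJordanDecomposition.negPart := by
  have hpos : μ.toJordanDecomposition.posPart.toSignedMeasure.Integrable f := by
    rw [VectorMeasure.Integrable, Measure.variation_toSignedMeasure]
    exact integrable_posPart_of_integrable_variation hf
  have hneg : μ.toJordanDecomposition.negPart.toSignedMeasure.Integrable f := by
    rw [VectorMeasure.Integrable, Measure.variation_toSignedMeasure]
    exact integrable_negPart_of_integrable_variation hf
  rw [← VectorMeasure.integral_toSignedMeasure, ← VectorMeasure.integral_toSignedMeasure,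
    ← VectorMeasure.integral_sub_vectorMeasure hpos hneg,
    ← JordanDecomposition.toSignedMeasure, μ.toSignedMeasure_toJordanDecomposition]

variable [InnerProductSpace ℝ E] [CompleteSpace E]

theorem sInt_inner_right {μ : SignedMeasure X} {f : X → E} (hf : Integrable f μ.variation)
    (v : E) : sInt μ (fun x ↦ inner ℝ v (f x)) = inner ℝ v (∫ᵛ x, f x ∂<•μ) := by
  rw [integral_eq_integral_posPart_sub_integral_negPart hf, inner_sub_right,
    ← integral_inner (integrable_posPart_of_integrable_variation hf),
    ← integral_inner (integrable_negPart_of_integrable_variation hf), sInt]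

theorem sInt_sInt_inner {μ ν : SignedMeasure X} {f : X → E} (hμ : Integrable f μ.variation)
    (hν : Integrable f ν.variation) :
    sInt μ (fun x ↦ sInt ν fun y ↦ inner ℝ (f x) (f y)) =
      inner ℝ (∫ᵛ x, f x ∂<•μ) (∫ᵛ x, f x ∂<•ν) := by
  simp only [sInt_inner_right hν, real_inner_comm (∫ᵛ x, f x ∂<•ν), sInt_inner_right hμ]

end SignedIntegral

open ProbabilityTheory in
theorem measure_ext_of_forall_integral_exp_inner {H : Type*} [NormedAddCommGroup H]
    [InnerProductSpace ℝ H] [CompleteSpace H] [SecondCountableTopology H] [MeasurableSpace H]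
    [BorelSpace H] {P Q : Measure H} [IsFiniteMeasure P] [IsFiniteMeasure Q]
    (hP : ∀ a, Integrable (fun x ↦ exp (inner ℝ x a)) P)
    (hPQ : ∀ a, ∫ x, exp (inner ℝ x a) ∂P = ∫ x, exp (inner ℝ x a) ∂Q) : P = Q := by
  have hmass : P = 0 ↔ Q = 0 := by
    have h := hPQ 0
    simp only [inner_zero_right, Real.exp_zero, integral_const, smul_eq_mul, mul_one] at h
    rw [← Measure.measure_univ_eq_zero, ← measureReal_eq_zero_iff, h, measureReal_eq_zero_iff,
      Measure.measure_univ_eq_zero]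
  refine Measure.ext_of_charFun (funext fun a ↦ ?_)
  have hmgf : mgf (inner ℝ · a) P = mgf (inner ℝ · a) Q := by
    ext t
    simpa only [mgf, real_inner_smul_right] using hPQ (t • a)
  have hset : integrableExpSet (inner ℝ · a) P = Set.univ := by
    ext t
    simpa only [integrableExpSet, real_inner_smul_right, Set.mem_univ, iff_true,
      Set.mem_ofPred_eq] using hP (t • a)
  have hI := eqOn_complexMGF_of_mgf' hmgf hmass (x := Complex.I) (by simp [hset])
  simpa only [complexMGF, charFun, mul_comm Complex.I] using hI

section GaussianWeight

theorem exp_neg_norm_sq_mul_exp_inner {H : Type*} [NormedAddCommGroup H]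
    [InnerProductSpace ℝ H] (x a : H) :
    exp (-‖x‖ ^ 2) * exp (inner ℝ x a) =
      exp (‖a‖ ^ 2 / 4) * exp (-‖x - (2⁻¹ : ℝ) • a‖ ^ 2) := by
  rw [← Real.exp_add, ← Real.exp_add, norm_sub_sq_real, real_inner_smul_right,
    norm_smul_of_nonneg (by positivity)]
  ring_nf

variable {H : Type*} [NormedAddCommGroup H] [MeasurableSpace H] [BorelSpace H]

/-- The measure with density `exp (-‖x‖ ^ 2)` with respect to `P`. It turns Gaussian integrals
into Laplace transforms, and has finite Laplace transform whenever `P` is finite. -/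
noncomputable def gaussianWeighted (P : Measure H) : Measure H :=
  P.withDensity fun x ↦ ENNReal.ofReal (exp (-‖x‖ ^ 2))

theorem integrable_gaussianWeighted_iff {P : Measure H} {f : H → ℝ} :
    Integrable f (gaussianWeighted P) ↔ Integrable (fun x ↦ exp (-‖x‖ ^ 2) * f x) P := by
  rw [gaussianWeighted, integrable_withDensity_iff_integrable_smul' (by fun_prop) (by simp)]
  simp only [ENNReal.toReal_ofReal (exp_nonneg _), smul_eq_mul]

theorem integral_gaussianWeighted (P : Measure H) (f : H → ℝ) :
    ∫ x, f x ∂gaussianWeighted P = ∫ x, exp (-‖x‖ ^ 2) * f x ∂P := by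
  rw [gaussianWeighted, integral_withDensity_eq_integral_toReal_smul (by fun_prop) (by simp)]
  simp only [ENNReal.toReal_ofReal (exp_nonneg _), smul_eq_mul]

theorem gaussianWeighted_injective : Function.Injective (gaussianWeighted (H := H)) := by
  refine Function.LeftInverse.injective
    (g := fun P ↦ P.withDensity fun x ↦ (ENNReal.ofReal (exp (-‖x‖ ^ 2)))⁻¹) fun P ↦ ?_
  exact withDensity_inv_same (by fun_prop) (by simp [exp_pos]) (by simp)

instance {P : Measure H} [IsFiniteMeasure P] : IsFiniteMeasure (gaussianWeighted P) :=
  isFiniteMeasure_withDensity_ofReal <|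
    .of_bounded (C := 1) (.of_forall fun x ↦ by simp [abs_of_pos (exp_pos _)])

variable [InnerProductSpace ℝ H]

theorem integrable_exp_inner_gaussianWeighted [SecondCountableTopology H] (P : Measure H)
    [IsFiniteMeasure P] (a : H) :
    Integrable (fun x ↦ exp (inner ℝ x a)) (gaussianWeighted P) := by
  simp only [integrable_gaussianWeighted_iff, exp_neg_norm_sq_mul_exp_inner]
  refine .const_mul (.of_bound (by fun_prop) 1 (.of_forall fun x ↦ ?_)) _
  simp [abs_of_pos (exp_pos _)]

theorem integral_exp_inner_gaussianWeighted (P : Measure H) (a : H) :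
    ∫ x, exp (inner ℝ x a) ∂gaussianWeighted P =
      exp (‖a‖ ^ 2 / 4) * ∫ x, exp (-‖x - (2⁻¹ : ℝ) • a‖ ^ 2) ∂P := by
  simp only [integral_gaussianWeighted, exp_neg_norm_sq_mul_exp_inner, integral_const_mul]

theorem measure_ext_of_forall_integral_exp_neg_norm_sub_sq [CompleteSpace H]
    [SecondCountableTopology H] {P Q : Measure H} [IsFiniteMeasure P] [IsFiniteMeasure Q]
    (hPQ : ∀ a, ∫ x, exp (-‖x - a‖ ^ 2) ∂P = ∫ x, exp (-‖x - a‖ ^ 2) ∂Q) : P = Q :=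
  gaussianWeighted_injective <|
    measure_ext_of_forall_integral_exp_inner (integrable_exp_inner_gaussianWeighted P) fun a ↦ by
      simp only [integral_exp_inner_gaussianWeighted, hPQ]

end GaussianWeight

theorem measure_ext_of_map_eq {α β : Type*} [mα : MeasurableSpace α] [mβ : MeasurableSpace β]
    {f : α → β} (hf : mα = mβ.comap f) {P Q : Measure α} (hPQ : P.map f = Q.map f) : P = Q := by
  have hmeas : Measurable f := hf ▸ comap_measurable f
  refine Measure.ext fun s hs ↦ ?_
  rw [hf] at hs
  obtain ⟨t, ht, rfl⟩ := hs
  rw [← Measure.map_apply hmeas ht, hPQ, Measure.map_apply hmeas ht]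

theorem signedMeasure_eq_zero_of_posPart_eq_negPart {X : Type*} [MeasurableSpace X]
    {μ : SignedMeasure X}
    (h : μ.toJordanDecomposition.posPart = μ.toJordanDecomposition.negPart) : μ = 0 := by
  rw [← μ.toSignedMeasure_toJordanDecomposition, JordanDecomposition.toSignedMeasure]
  simp only [h, sub_self]

theorem isInducing_of_norm_sub_sq_eq_dist {X H : Type*} [PseudoMetricSpace X]
    [SeminormedAddCommGroup H] {φ : X → H} (hφ : ∀ x y, ‖φ x - φ y‖ ^ 2 = dist x y) :
    Topology.IsInducing φ := by
  refine IsUniformInducing.isInducing <| Metric.isUniformInducing_iff.2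
    ⟨?_, fun δ hδ ↦ ⟨√δ, sqrt_pos.2 hδ, fun {x y} h ↦ ?_⟩⟩
  · refine Metric.uniformContinuous_iff.2 fun ε hε ↦ ⟨ε ^ 2, by positivity, fun {x y} h ↦ ?_⟩
    rw [← hφ] at h
    rw [dist_eq_norm]
    exact lt_of_pow_lt_pow_left₀ 2 hε.le h
  · rw [← hφ, ← dist_eq_norm]
    exact (lt_sqrt dist_nonneg).1 h

theorem exists_norm_sub_sq_eq_dist_secondCountable {X : Type*} {H : Type u} [PseudoMetricSpace X]
    [SecondCountableTopology X] [NormedAddCommGroup H] [InnerProductSpace ℝ H] {φ : X → H}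
    (hφ : ∀ x y, ‖φ x - φ y‖ ^ 2 = dist x y) :
    ∃ (K : Type u) (_ : NormedAddCommGroup K) (_ : InnerProductSpace ℝ K) (_ : CompleteSpace K)
      (_ : SecondCountableTopology K) (ψ : X → K), ∀ x y, ‖ψ x - ψ y‖ ^ 2 = dist x y := by
  let S := Submodule.span ℝ (Set.range φ)
  have hsep : TopologicalSpace.IsSeparable (S : Set H) :=
    (TopologicalSpace.isSeparable_range (isInducing_of_norm_sub_sq_eq_dist hφ).continuous).span
  have : TopologicalSpace.SeparableSpace S := hsep.separableSpace
  have : SecondCountableTopology (UniformSpace.Completion S) :=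
    UniformSpace.secondCountable_of_separable _
  let φS : X → S := fun x ↦ ⟨φ x, Submodule.subset_span ⟨x, rfl⟩⟩
  refine ⟨UniformSpace.Completion S, inferInstance, inferInstance, inferInstance, this,
    fun x ↦ φS x, fun x y ↦ ?_⟩
  rw [← UniformSpace.Completion.coe_sub, UniformSpace.Completion.norm_coe]
  exact hφ x y

theorem eq_zero_of_forall_sInt_exp_neg_norm_sub_sq_eq_zero {X K : Type*} [TopologicalSpace X]
    [MeasurableSpace X] [BorelSpace X] [NormedAddCommGroup K] [InnerProductSpace ℝ K]
    [CompleteSpace K] [SecondCountableTopology K] {ψ : X → K} (hψ : Topology.IsInducing ψ)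
    {μ : SignedMeasure X} (hμ : ∀ a, sInt μ (fun x ↦ exp (-‖ψ x - a‖ ^ 2)) = 0) : μ = 0 := by
  borelize K
  have hcomap : ‹MeasurableSpace X› = (borel K).comap ψ := by
    rw [BorelSpace.measurable_eq (α := X), hψ.eq_induced, borel_comap]
  have hmap (P : Measure X) (a : K) :
      ∫ z, exp (-‖z - a‖ ^ 2) ∂P.map ψ = ∫ x, exp (-‖ψ x - a‖ ^ 2) ∂P :=
    integral_map hψ.continuous.aemeasurable (by fun_prop)
  refine signedMeasure_eq_zero_of_posPart_eq_negPart (measure_ext_of_map_eq hcomap ?_)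
  refine measure_ext_of_forall_integral_exp_neg_norm_sub_sq fun a ↦ ?_
  rw [hmap, hmap]
  exact sub_eq_zero.1 (hμ a)

theorem integrable_variation_of_continuous_of_norm_le {X E : Type*} [TopologicalSpace X]
    [SecondCountableTopology X] [MeasurableSpace X] [OpensMeasurableSpace X]
    [NormedAddCommGroup E] {μ : SignedMeasure X} {f : X → E} (hf : Continuous f) {C : ℝ}
    (hC : ∀ x, ‖f x‖ ≤ C) : Integrable f μ.variation := by
  have : IsFiniteMeasure μ.variation := by
    rw [← SignedMeasure.totalVariation_eq_variation]
    unfold SignedMeasure.totalVariation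
    infer_instance
  exact .of_bound hf.aestronglyMeasurable C (.of_forall hC)

theorem integrable_variation_of_inner_eq_exp_neg_norm_sub_sq {X K E : Type*} [TopologicalSpace X]
    [SecondCountableTopology X] [MeasurableSpace X] [OpensMeasurableSpace X]
    [NormedAddCommGroup K] [NormedAddCommGroup E] [InnerProductSpace ℝ E] {F : K → E}
    (hF : ∀ a b, inner ℝ (F a) (F b) = exp (-‖a - b‖ ^ 2)) {ψ : X → K} (hψ : Continuous ψ)
    {μ : SignedMeasure X} : Integrable (fun x ↦ F (ψ x)) μ.variation := by
  have hF_cont : Continuous F :=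
    continuous_of_continuous_inner (𝕜 := ℝ) (by simp only [hF]; fun_prop)
  have hF_norm (a : K) : ‖F a‖ ≤ 1 := by
    rw [← sq_le_one_iff₀ (norm_nonneg _), ← real_inner_self_eq_norm_sq, hF]
    simp
  exact integrable_variation_of_continuous_of_norm_le (hF_cont.comp hψ) fun x ↦ hF_norm (ψ x)

theorem stmt0_general {X : Type*} [MetricSpace X] [SecondCountableTopology X]
    [MeasurableSpace X] [BorelSpace X]
    {H : Type*} [NormedAddCommGroup H] [InnerProductSpace ℝ H]
    (φ : X → H) (hφ : ∀ x y : X, ‖φ x - φ y‖ ^ 2 = dist x y)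
    (μ : SignedMeasure X) :
    0 ≤ simForm μ μ ∧ (simForm μ μ = 0 → μ = 0) := by
  obtain ⟨K, _, _, _, _, ψ, hψ⟩ := exists_norm_sub_sq_eq_dist_secondCountable hφ
  obtain ⟨E, _, _, _, F, hF⟩ := exists_inner_eq_exp_neg_norm_sub_sq K
  have hψ_ind := isInducing_of_norm_sub_sq_eq_dist hψ
  have hint : Integrable (fun x ↦ F (ψ x)) μ.variation :=
    integrable_variation_of_inner_eq_exp_neg_norm_sub_sq hF hψ_ind.continuous
  have hform : simForm μ μ = ‖∫ᵛ x, F (ψ x) ∂<•μ‖ ^ 2 := by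
    rw [← real_inner_self_eq_norm_sq, ← sInt_sInt_inner hint hint]
    simp only [hF, hψ, simForm]
  refine ⟨hform ▸ sq_nonneg _, fun hzero ↦ ?_⟩
  have hmean : ∫ᵛ x, F (ψ x) ∂<•μ = 0 := by simpa [hform] using hzero
  refine eq_zero_of_forall_sInt_exp_neg_norm_sub_sq_eq_zero hψ_ind fun a ↦ ?_
  calc sInt μ (fun x ↦ exp (-‖ψ x - a‖ ^ 2)) = sInt μ (fun x ↦ inner ℝ (F a) (F (ψ x))) := by
        simp only [hF, norm_sub_rev a]
    _ = 0 := by rw [sInt_inner_right hint, hmean, inner_zero_right]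

theorem stmt0 {X : Type*} [MetricSpace X] [CompactSpace X]
    [MeasurableSpace X] [BorelSpace X]
    {H : Type*} [NormedAddCommGroup H] [InnerProductSpace ℝ H] [CompleteSpace H]
    (φ : X → H) (hφ : ∀ x y : X, ‖φ x - φ y‖ ^ 2 = dist x y)
    (μ : SignedMeasure X) :
    0 ≤ simForm μ μ ∧ (simForm μ μ = 0 → μ = 0) :=
  stmt0_general φ hφ μ
end

section
/- Let (X,d) be a compact metric space of negative type, let μ be its diversity-maximizing measure, and let Y = supp μ. Then the measure (1/⟨μ,μ⟩_W)·μ, restricted to Y, is a nonnegative weight for the compact metric space (Y,d): for every x ∈ Y, (1/⟨μ,μ⟩_W) ∫_Y e^{−d(x,y)} dμ(y) = 1. Consequently, the maximum diversity of X equals the supremum of w(Y) over all pairs (Y, w) where Y ⊆ X is closed and w is a nonnegative weight for (Y,d), and this supremum is attained at Y = supp μ. -/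
open MeasureTheory Real

/-- The similarity form ⟨μ,ν⟩_W = ∬ e^{-d(x,y)} dμ(x) dν(y) for (nonnegative) Borel
measures. -/
noncomputable def simFormP {X : Type*} [MetricSpace X] [MeasurableSpace X]
    (μ ν : Measure X) : ℝ :=
  ∫ x, ∫ y, Real.exp (-dist x y) ∂ν ∂μ

/-- The support of a Borel measure: points all of whose open neighbourhoods have
positive measure. -/
def measSupport {X : Type*} [TopologicalSpace X] [MeasurableSpace X]
    (μ : Measure X) : Set X :=
  {x | ∀ U : Set X, IsOpen U → x ∈ U → 0 < μ U}

/-!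
Perturbing an energy minimizer `μ` towards a Dirac mass at `x` changes the energy to first order by
a positive multiple of `potential K μ x - mutualEnergy K μ μ`, so the potential of `μ` is everywhere
at least its energy. The `μ`-average of the potential is that same energy, hence the potential is
`μ`-a.e. constant, and by continuity constant on the support: dividing `μ` by its energy gives a
weight for `supp μ`. Conversely, a weight `w` has energy `w(X)`, so its normalization is a
probability measure of energy `1 / w(X)`, which bounds `w(X)` by the inverse of the least energy.
-/

open Function
open scoped ENNReal Topology

section Energy

variable {X : Type*} [MeasurableSpace X]

/-- The potential `x ↦ ∫ K(x, y) dμ(y)` of a measure `μ` for a real kernel `K`. A weight is a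
measure whose potential for the kernel `exp (-d)` is identically one on its carrier. -/
noncomputable def potential (K : X → X → ℝ) (μ : Measure X) (x : X) : ℝ :=
  ∫ y, K x y ∂μ

/-- The mutual energy `∬ K(x, y) dμ(x) dν(y)` of two measures, computed as the integral against `μ`
of the potential of `ν`. The similarity form is the case `K = exp (-d)`. -/
noncomputable def mutualEnergy (K : X → X → ℝ) (μ ν : Measure X) : ℝ :=
  ∫ x, potential K ν x ∂μ

/-- A measure `μ` is an energy minimizer if no probability measure has smaller energy. For the
kernel `exp (-d)` the probability measures among these are the diversity-maximizing ones. -/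
def IsEnergyMinimizer (K : X → X → ℝ) (μ : Measure X) : Prop :=
  ∀ ν : Measure X, IsProbabilityMeasure ν → mutualEnergy K μ μ ≤ mutualEnergy K ν ν

variable {K : X → X → ℝ} {C : ℝ} {μ ν : Measure X}

theorem potential_smul_measure (K : X → X → ℝ) (c : ℝ≥0∞) (μ : Measure X) (x : X) :
    potential K (c • μ) x = c.toReal * potential K μ x :=
  integral_smul_measure _ c

theorem mutualEnergy_smul_left (K : X → X → ℝ) (c : ℝ≥0∞) (μ ν : Measure X) :
    mutualEnergy K (c • μ) ν = c.toReal * mutualEnergy K μ ν :=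
  integral_smul_measure _ c

theorem mutualEnergy_smul_right (K : X → X → ℝ) (c : ℝ≥0∞) (μ ν : Measure X) :
    mutualEnergy K μ (c • ν) = c.toReal * mutualEnergy K μ ν := by
  simp only [mutualEnergy, potential_smul_measure, integral_const_mul]

theorem mutualEnergy_dirac_left [SFinite μ] (hK : Measurable (uncurry K)) (x : X) :
    mutualEnergy K (Measure.dirac x) μ = potential K μ x :=
  integral_dirac' _ x hK.stronglyMeasurable.integral_prod_right

theorem integrable_uncurry_of_bound [IsFiniteMeasure μ] [IsFiniteMeasure ν]
    (hK : Measurable (uncurry K)) (hC : ∀ x y, ‖K x y‖ ≤ C) :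
    Integrable (uncurry K) (μ.prod ν) :=
  .of_bound hK.aestronglyMeasurable C (ae_of_all _ fun p => hC p.1 p.2)

theorem integrable_potential [IsFiniteMeasure μ] [IsFiniteMeasure ν]
    (hK : Measurable (uncurry K)) (hC : ∀ x y, ‖K x y‖ ≤ C) : Integrable (potential K ν) μ :=
  (integrable_uncurry_of_bound hK hC).integral_prod_left

theorem mutualEnergy_comm [IsFiniteMeasure μ] [IsFiniteMeasure ν] (hK : Measurable (uncurry K))
    (hC : ∀ x y, ‖K x y‖ ≤ C) (hsymm : ∀ x y, K x y = K y x) :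
    mutualEnergy K μ ν = mutualEnergy K ν μ := by
  simpa only [mutualEnergy, potential, hsymm] using
    integral_integral_swap (integrable_uncurry_of_bound (μ := μ) (ν := ν) hK hC)

theorem mutualEnergy_add_left {ρ : Measure X} [IsFiniteMeasure μ] [IsFiniteMeasure ν]
    [IsFiniteMeasure ρ] (hK : Measurable (uncurry K)) (hC : ∀ x y, ‖K x y‖ ≤ C) :
    mutualEnergy K (μ + ν) ρ = mutualEnergy K μ ρ + mutualEnergy K ν ρ :=
  integral_add_measure (integrable_potential hK hC) (integrable_potential hK hC)

theorem mutualEnergy_add_self [IsFiniteMeasure μ] [IsFiniteMeasure ν]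
    (hK : Measurable (uncurry K)) (hC : ∀ x y, ‖K x y‖ ≤ C) (hsymm : ∀ x y, K x y = K y x) :
    mutualEnergy K (μ + ν) (μ + ν) =
      mutualEnergy K μ μ + 2 * mutualEnergy K ν μ + mutualEnergy K ν ν := by
  rw [mutualEnergy_add_left hK hC, mutualEnergy_comm (μ := μ) hK hC hsymm,
    mutualEnergy_comm (μ := ν) hK hC hsymm, mutualEnergy_add_left hK hC,
    mutualEnergy_add_left hK hC, mutualEnergy_comm (μ := μ) (ν := ν) hK hC hsymm]
  ring

theorem mutualEnergy_combo_self [IsFiniteMeasure μ] [IsFiniteMeasure ν]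
    (hK : Measurable (uncurry K)) (hC : ∀ x y, ‖K x y‖ ≤ C) (hsymm : ∀ x y, K x y = K y x)
    {s t : ℝ} (hs : 0 ≤ s) (ht : 0 ≤ t) :
    mutualEnergy K (ENNReal.ofReal s • μ + ENNReal.ofReal t • ν)
        (ENNReal.ofReal s • μ + ENNReal.ofReal t • ν) =
      s ^ 2 * mutualEnergy K μ μ + 2 * s * t * mutualEnergy K ν μ + t ^ 2 * mutualEnergy K ν ν := by
  have := μ.smul_finite (ENNReal.ofReal_ne_top (r := s))
  have := ν.smul_finite (ENNReal.ofReal_ne_top (r := t))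
  rw [mutualEnergy_add_self hK hC hsymm]
  simp only [mutualEnergy_smul_left, mutualEnergy_smul_right, ENNReal.toReal_ofReal hs,
    ENNReal.toReal_ofReal ht]
  ring

theorem isProbabilityMeasure_combo [IsProbabilityMeasure μ] [IsProbabilityMeasure ν] {s t : ℝ}
    (hs : 0 ≤ s) (ht : 0 ≤ t) (hst : s + t = 1) :
    IsProbabilityMeasure (ENNReal.ofReal s • μ + ENNReal.ofReal t • ν) where
  measure_univ := by
    simp only [Measure.add_apply, Measure.smul_apply, measure_univ, smul_eq_mul, mul_one,
      ← ENNReal.ofReal_add hs ht, hst, ENNReal.ofReal_one]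

theorem le_of_forall_le_segment_quadratic {a b c : ℝ}
    (h : ∀ t ∈ Set.Ioc (0 : ℝ) 1, a ≤ (1 - t) ^ 2 * a + 2 * (1 - t) * t * b + t ^ 2 * c) :
    a ≤ b := by
  have hslope : ∀ t ∈ Set.Ioc (0 : ℝ) 1, a - b ≤ t * ((a - 2 * b + c) / 2) := fun t ht => by
    refine le_of_mul_le_mul_left ?_ ht.1
    linarith [h t ht]
  have hlim : Filter.Tendsto (fun t : ℝ => t * ((a - 2 * b + c) / 2)) (𝓝[>] 0) (𝓝 0) :=
    tendsto_nhdsWithin_of_tendsto_nhds (Continuous.tendsto' (by fun_prop) _ _ (zero_mul _))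
  exact sub_nonpos.1 (ge_of_tendsto hlim
    (Filter.eventually_of_mem (Ioc_mem_nhdsGT zero_lt_one) hslope))

namespace IsEnergyMinimizer

theorem isLeast_energy [IsProbabilityMeasure μ] (hμ : IsEnergyMinimizer K μ) :
    IsLeast {r : ℝ | ∃ ν : Measure X, IsProbabilityMeasure ν ∧ r = mutualEnergy K ν ν}
      (mutualEnergy K μ μ) :=
  ⟨⟨μ, inferInstance, rfl⟩, fun _ ⟨ν, hν, hr⟩ => hr ▸ hμ ν hν⟩

theorem self_le_mutualEnergy [IsProbabilityMeasure μ] [IsProbabilityMeasure ν]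
    (hμ : IsEnergyMinimizer K μ) (hK : Measurable (uncurry K)) (hC : ∀ x y, ‖K x y‖ ≤ C)
    (hsymm : ∀ x y, K x y = K y x) : mutualEnergy K μ μ ≤ mutualEnergy K ν μ := by
  refine le_of_forall_le_segment_quadratic (c := mutualEnergy K ν ν) fun t ht => ?_
  have hs : 0 ≤ 1 - t := sub_nonneg.2 ht.2
  rw [← mutualEnergy_combo_self hK hC hsymm hs ht.1.le]
  exact hμ _ (isProbabilityMeasure_combo hs ht.1.le (sub_add_cancel 1 t))

theorem self_le_potential [IsProbabilityMeasure μ] (hμ : IsEnergyMinimizer K μ)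
    (hK : Measurable (uncurry K)) (hC : ∀ x y, ‖K x y‖ ≤ C) (hsymm : ∀ x y, K x y = K y x)
    (x : X) : mutualEnergy K μ μ ≤ potential K μ x :=
  (hμ.self_le_mutualEnergy hK hC hsymm).trans_eq (mutualEnergy_dirac_left hK x)

theorem potential_ae_eq [IsProbabilityMeasure μ] (hμ : IsEnergyMinimizer K μ)
    (hK : Measurable (uncurry K)) (hC : ∀ x y, ‖K x y‖ ≤ C) (hsymm : ∀ x y, K x y = K y x) :
    potential K μ =ᵐ[μ] fun _ => mutualEnergy K μ μ := by
  refine ((integral_eq_iff_of_ae_le (integrable_const _) (integrable_potential hK hC)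
    (ae_of_all _ (hμ.self_le_potential hK hC hsymm))).1 ?_).symm
  rw [integral_const, probReal_univ, one_smul, mutualEnergy]

end IsEnergyMinimizer

theorem mutualEnergy_self_of_potential_ae_eq_one (hμ : potential K μ =ᵐ[μ] 1) :
    mutualEnergy K μ μ = μ.real Set.univ := by
  rw [mutualEnergy, integral_congr_ae hμ]
  simp only [Pi.one_apply, integral_const, smul_eq_mul, mul_one]

theorem mutualEnergy_normalize_self_of_potential_ae_eq_one (hμ : potential K μ =ᵐ[μ] 1) :
    mutualEnergy K ((μ Set.univ)⁻¹ • μ) ((μ Set.univ)⁻¹ • μ) = (μ.real Set.univ)⁻¹ := by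
  rw [mutualEnergy_smul_left, mutualEnergy_smul_right,
    mutualEnergy_self_of_potential_ae_eq_one hμ, ENNReal.toReal_inv, ← measureReal_def]
  field_simp

theorem IsEnergyMinimizer.measureReal_univ_le_one_div [IsFiniteMeasure ν]
    (hμ : IsEnergyMinimizer K μ) (hpos : 0 < mutualEnergy K μ μ) (hν : potential K ν =ᵐ[ν] 1) :
    ν.real Set.univ ≤ 1 / mutualEnergy K μ μ := by
  rcases eq_zero_or_neZero ν with rfl | _
  · simpa using hpos.le
  have henergy := hμ _ (isProbabilityMeasureSMul (μ := ν))
  rw [mutualEnergy_normalize_self_of_potential_ae_eq_one hν] at henergy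
  rw [one_div]
  exact (le_inv_comm₀ hpos measureReal_univ_pos).1 henergy

theorem integral_pos_of_forall_pos {f : X → ℝ} [NeZero μ] (hf : Integrable f μ)
    (hpos : ∀ x, 0 < f x) : 0 < ∫ x, f x ∂μ := by
  rw [integral_pos_iff_support_of_nonneg (fun x => (hpos x).le) hf,
    support_eq_univ fun x => (hpos x).ne']
  exact NeZero.pos _

theorem mutualEnergy_pos [IsFiniteMeasure μ] [NeZero μ] [IsFiniteMeasure ν] [NeZero ν]
    (hK : Measurable (uncurry K)) (hC : ∀ x y, ‖K x y‖ ≤ C) (hpos : ∀ x y, 0 < K x y) :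
    0 < mutualEnergy K μ ν :=
  integral_pos_of_forall_pos (integrable_potential hK hC) fun x =>
    have hsection : Integrable (K x) ν :=
      .of_bound hK.of_uncurry_left.aestronglyMeasurable C (ae_of_all _ (hC x))
    integral_pos_of_forall_pos hsection (hpos x)

end Energy

section Support

variable {X : Type*} [TopologicalSpace X] [MeasurableSpace X] {μ : Measure X}

theorem measSupport_eq_support (μ : Measure X) : measSupport μ = μ.support := by
  ext x
  rw [(nhds_basis_opens x).mem_measureSupport]
  exact ⟨fun h U hU => h U hU.2 hU.1, fun h U hU hx => h U ⟨hx, hU⟩⟩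

theorem measSupport_mem_ae [HereditarilyLindelofSpace X] : measSupport μ ∈ ae μ :=
  measSupport_eq_support μ ▸ Measure.support_mem_ae

theorem restrict_measSupport [HereditarilyLindelofSpace X] : μ.restrict (measSupport μ) = μ :=
  Measure.restrict_eq_self_of_ae_mem (s := measSupport μ) measSupport_mem_ae

theorem isClosed_measSupport : IsClosed (measSupport μ) :=
  measSupport_eq_support μ ▸ Measure.isClosed_support

theorem eqOn_measSupport_of_ae_eq {Y : Type*} [TopologicalSpace Y] [T2Space Y] {f g : X → Y}
    (hf : Continuous f) (hg : Continuous g) (hfg : f =ᵐ[μ] g) : Set.EqOn f g (measSupport μ) := by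
  intro x hx
  by_contra hne
  exact (hx {z | f z ≠ g z} (isOpen_ne_fun hf hg) hne).ne' (ae_iff.1 hfg)

theorem continuous_potential [FirstCountableTopology X] [IsFiniteMeasure μ] {K : X → X → ℝ} {C : ℝ}
    (hK : ∀ x, Measurable (K x)) (hcont : ∀ y, Continuous fun x => K x y)
    (hC : ∀ x y, ‖K x y‖ ≤ C) : Continuous (potential K μ) :=
  continuous_of_dominated (fun x => (hK x).aestronglyMeasurable)
    (fun x => ae_of_all _ (hC x)) (integrable_const C) (ae_of_all _ hcont)

theorem IsEnergyMinimizer.potential_eq_of_mem_measSupport [FirstCountableTopology X]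
    [IsProbabilityMeasure μ] {K : X → X → ℝ} {C : ℝ} (hμ : IsEnergyMinimizer K μ)
    (hK : Measurable (uncurry K)) (hcont : ∀ y, Continuous fun x => K x y)
    (hC : ∀ x y, ‖K x y‖ ≤ C) (hsymm : ∀ x y, K x y = K y x) {x : X} (hx : x ∈ measSupport μ) :
    potential K μ x = mutualEnergy K μ μ :=
  eqOn_measSupport_of_ae_eq (continuous_potential (fun _ => hK.of_uncurry_left) hcont hC)
    continuous_const (hμ.potential_ae_eq hK hC hsymm) hx

end Support

theorem stmt8_general {X : Type*} [TopologicalSpace X] [FirstCountableTopology X]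
    [HereditarilyLindelofSpace X] [MeasurableSpace X] {K : X → X → ℝ} {C : ℝ}
    (hK : Measurable (uncurry K)) (hcont : ∀ y, Continuous fun x => K x y)
    (hC : ∀ x y, ‖K x y‖ ≤ C) (hsymm : ∀ x y, K x y = K y x)
    {μ : Measure X} [IsProbabilityMeasure μ] (hμ : IsEnergyMinimizer K μ)
    (hpos : 0 < mutualEnergy K μ μ) :
    (∀ x ∈ measSupport μ,
      potential K ((ENNReal.ofReal (mutualEnergy K μ μ))⁻¹ • μ.restrict (measSupport μ)) x = 1) ∧
    IsGreatest {r : ℝ | ∃ (Y : Set X) (w : Measure X), IsClosed Y ∧ IsFiniteMeasure w ∧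
        w Yᶜ = 0 ∧ (∀ x ∈ Y, potential K w x = 1) ∧ r = (w Set.univ).toReal}
      (1 / sInf {r : ℝ | ∃ ν : Measure X, IsProbabilityMeasure ν ∧ r = mutualEnergy K ν ν}) ∧
    (1 / sInf {r : ℝ | ∃ ν : Measure X, IsProbabilityMeasure ν ∧ r = mutualEnergy K ν ν}) =
      (((ENNReal.ofReal (mutualEnergy K μ μ))⁻¹ • μ.restrict (measSupport μ)) Set.univ).toReal := by
  rw [hμ.isLeast_energy.csInf_eq, restrict_measSupport]
  set w := (ENNReal.ofReal (mutualEnergy K μ μ))⁻¹ • μ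
  have hweight : ∀ x ∈ measSupport μ, potential K w x = 1 := fun x hx => by
    rw [potential_smul_measure, hμ.potential_eq_of_mem_measSupport hK hcont hC hsymm hx,
      ENNReal.toReal_inv, ENNReal.toReal_ofReal hpos.le, inv_mul_cancel₀ hpos.ne']
  have hmass : 1 / mutualEnergy K μ μ = (w Set.univ).toReal := by
    simp [w, ENNReal.toReal_ofReal hpos.le]
  have hfinite : IsFiniteMeasure w :=
    μ.smul_finite (ENNReal.inv_ne_top.2 (ENNReal.ofReal_pos.2 hpos).ne')
  have hnull : w (measSupport μ)ᶜ = 0 :=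
    Measure.smul_absolutelyContinuous (mem_ae_iff.1 measSupport_mem_ae)
  refine ⟨hweight, ⟨?_, ?_⟩, hmass⟩
  · exact ⟨measSupport μ, w, isClosed_measSupport, hfinite, hnull, hweight, hmass⟩
  · rintro _ ⟨Y, v, -, _, hY, hvY, rfl⟩
    exact hμ.measureReal_univ_le_one_div hpos (Filter.mem_of_superset (mem_ae_iff.2 hY) hvY)

section Similarity

variable {X : Type*} [PseudoMetricSpace X]

theorem norm_exp_neg_dist_le_one (x y : X) : ‖exp (-dist x y)‖ ≤ 1 := by
  rw [norm_of_nonneg (exp_pos _).le, exp_le_one_iff]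
  exact neg_nonpos.2 dist_nonneg

theorem measurable_uncurry_exp_neg_dist [SecondCountableTopology X] [MeasurableSpace X]
    [OpensMeasurableSpace X] : Measurable (uncurry fun x y : X => exp (-dist x y)) :=
  measurable_dist.neg.exp

end Similarity

theorem simFormP_pos {X : Type*} [MetricSpace X] [SecondCountableTopology X] [MeasurableSpace X]
    [OpensMeasurableSpace X] {μ ν : Measure X} [IsFiniteMeasure μ] [NeZero μ] [IsFiniteMeasure ν]
    [NeZero ν] : 0 < simFormP μ ν :=
  mutualEnergy_pos measurable_uncurry_exp_neg_dist norm_exp_neg_dist_le_one fun _ _ => exp_pos _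

theorem stmt8 {X : Type*} [MetricSpace X] [CompactSpace X]
    [MeasurableSpace X] [BorelSpace X]
    {H : Type*} [NormedAddCommGroup H] [InnerProductSpace ℝ H] [CompleteSpace H]
    (φ : X → H) (hφ : ∀ x y : X, ‖φ x - φ y‖ ^ 2 = dist x y)
    (μ : Measure X) (hμ : IsProbabilityMeasure μ)
    (hmax : ∀ ν : Measure X, IsProbabilityMeasure ν → simFormP μ μ ≤ simFormP ν ν) :
    -- the normalized measure restricted to `Y = supp μ` is a nonnegative weight for `Y`
    (∀ x ∈ measSupport μ,
      ∫ y, Real.exp (-dist x y)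
        ∂((ENNReal.ofReal (simFormP μ μ))⁻¹ • μ.restrict (measSupport μ)) = 1) ∧
    -- the maximum diversity is the greatest value `w(Y)` over closed `Y ⊆ X` carrying a
    -- nonnegative weight `w`, ...
    IsGreatest {r : ℝ | ∃ (Y : Set X) (w : Measure X), IsClosed Y ∧ IsFiniteMeasure w ∧
        w Yᶜ = 0 ∧ (∀ x ∈ Y, ∫ y, Real.exp (-dist x y) ∂w = 1) ∧ r = (w Set.univ).toReal}
      (1 / sInf {r : ℝ | ∃ ν : Measure X, IsProbabilityMeasure ν ∧ r = simFormP ν ν}) ∧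
    -- ... and this greatest value is attained at `Y = supp μ`
    (1 / sInf {r : ℝ | ∃ ν : Measure X, IsProbabilityMeasure ν ∧ r = simFormP ν ν}) =
      ((((ENNReal.ofReal (simFormP μ μ))⁻¹ • μ.restrict (measSupport μ))) Set.univ).toReal := by
  exact stmt8_general measurable_uncurry_exp_neg_dist (fun y => by fun_prop)
    norm_exp_neg_dist_le_one (fun x y => by rw [dist_comm]) hmax simFormP_pos
end

section
/- Let (Z,d) be a metric space and X, Y ⊆ Z subsets with X ∪ Y = Z and X ∩ Y = {a} for some point a, such that d(x,y) = d(x,a) + d(a,y) for every x ∈ X and y ∈ Y. If X and Y, equipped with the induced metrics, are both of negative type, then Z is of negative type. -/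
/-- A witness that a metric space is of negative type: an isometric embedding of
`(X, √d)` into a real Hilbert space. -/
structure NegTypeWitness (X : Type*) [MetricSpace X] where
  H : Type
  [grp : NormedAddCommGroup H]
  [inn : InnerProductSpace ℝ H]
  [comp : CompleteSpace H]
  φ : X → H
  isom : ∀ x y : X, ‖φ x - φ y‖ ^ 2 = dist x y

/-- A metric space is of negative type if `(X, √d)` embeds isometrically into a real
Hilbert space. -/
def IsOfNegativeType (X : Type*) [MetricSpace X] : Prop :=
  Nonempty (NegTypeWitness X)

/-!
Collapsing either half of the wedge sum to `a` gives maps `Z → X` and `Z → Y`, and the additivity of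
`d` through `a` says exactly that the two together embed `Z` isometrically into the `ℓ¹` product of
`X` and `Y`. That product is of negative type because the square of the norm on the Hilbert sum of
two Hilbert spaces is the sum of the squares.
-/

theorem withLp_one_prod_dist_eq_add {X Y : Type*} [PseudoMetricSpace X] [PseudoMetricSpace Y]
    (u v : WithLp 1 (X × Y)) : dist u v = dist u.fst v.fst + dist u.snd v.snd := by
  rw [WithLp.prod_dist_eq_add (by simp)]
  simp only [ENNReal.toReal_one, Real.rpow_one, div_one]

namespace IsOfNegativeType

variable {X Y : Type*} [MetricSpace X] [MetricSpace Y]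

theorem of_isometry {f : X → Y} (hf : Isometry f) (hY : IsOfNegativeType Y) :
    IsOfNegativeType X := by
  obtain ⟨H, φ, isom⟩ := hY
  exact ⟨⟨H, φ ∘ f, fun x y => (isom (f x) (f y)).trans (hf.dist_eq x y)⟩⟩

theorem withLp_one_prod (hX : IsOfNegativeType X) (hY : IsOfNegativeType Y) :
    IsOfNegativeType (WithLp 1 (X × Y)) := by
  obtain ⟨H, φ, isomX⟩ := hX
  obtain ⟨K, ψ, isomY⟩ := hY
  refine ⟨⟨WithLp 2 (H × K), fun u => WithLp.toLp 2 (φ u.fst, ψ u.snd), fun u v => ?_⟩⟩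
  calc ‖WithLp.toLp 2 (φ u.fst, ψ u.snd) - WithLp.toLp 2 (φ v.fst, ψ v.snd)‖ ^ 2
      = ‖φ u.fst - φ v.fst‖ ^ 2 + ‖ψ u.snd - ψ v.snd‖ ^ 2 := WithLp.prod_norm_sq_eq_of_L2 _
    _ = dist u.fst v.fst + dist u.snd v.snd := by rw [isomX, isomY]
    _ = dist u v := (withLp_one_prod_dist_eq_add u v).symm

end IsOfNegativeType

section Collapse

variable {α : Type*} {s t : Set α} {z : α}

/-- The retraction of the ambient type onto a subset `s` that sends everything outside `s` to the
base point `a`. On a wedge sum it is the projection onto the summand `s`. -/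
noncomputable def collapse (s : Set α) (a : s) : α → s :=
  Function.extend (↑) id fun _ => a

theorem coe_collapse_of_mem (a : s) (hz : z ∈ s) : (collapse s a z : α) = z :=
  congrArg Subtype.val (Subtype.val_injective.extend_apply id _ ⟨z, hz⟩)

theorem coe_collapse_of_notMem (a : s) (hz : z ∉ s) : (collapse s a z : α) = a :=
  congrArg Subtype.val (Function.extend_apply' _ _ z (by simpa using hz))

theorem coe_collapse_of_inter_subset (a : s) (hst : s ∩ t ⊆ {↑a}) (hz : z ∈ t) :
    (collapse s a z : α) = a := by
  by_cases hs : z ∈ s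
  · exact (coe_collapse_of_mem a hs).trans (hst ⟨hs, hz⟩)
  · exact coe_collapse_of_notMem a hs

end Collapse

section WedgeSum

variable {Z : Type*} [PseudoMetricSpace Z] {X Y : Set Z} {a : Z}

theorem dist_collapse_add_dist_collapse (haX : a ∈ X) (haY : a ∈ Y) (hunion : X ∪ Y = Set.univ)
    (hinter : X ∩ Y ⊆ {a}) (hadd : ∀ x ∈ X, ∀ y ∈ Y, dist x y = dist x a + dist a y) (z w : Z) :
    dist (collapse X ⟨a, haX⟩ z) (collapse X ⟨a, haX⟩ w) +
      dist (collapse Y ⟨a, haY⟩ z) (collapse Y ⟨a, haY⟩ w) = dist z w := by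
  have left_eq_self {x : Z} (hx : x ∈ X) := coe_collapse_of_mem ⟨a, haX⟩ hx
  have left_eq_base {y : Z} (hy : y ∈ Y) := coe_collapse_of_inter_subset ⟨a, haX⟩ hinter hy
  have right_eq_self {y : Z} (hy : y ∈ Y) := coe_collapse_of_mem ⟨a, haY⟩ hy
  have right_eq_base {x : Z} (hx : x ∈ X) :=
    coe_collapse_of_inter_subset ⟨a, haY⟩ (Set.inter_comm X Y ▸ hinter) hx
  have mem_or_mem (u : Z) : u ∈ X ∨ u ∈ Y := Set.eq_univ_iff_forall.mp hunion u
  rw [Subtype.dist_eq, Subtype.dist_eq]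
  rcases mem_or_mem z with hz | hz <;> rcases mem_or_mem w with hw | hw
  · rw [left_eq_self hz, left_eq_self hw, right_eq_base hz, right_eq_base hw, dist_self, add_zero]
  · rw [left_eq_self hz, left_eq_base hw, right_eq_base hz, right_eq_self hw, hadd z hz w hw]
  · rw [left_eq_base hz, left_eq_self hw, right_eq_self hz, right_eq_base hw, dist_comm z w,
      hadd w hw z hz, dist_comm w a, dist_comm a z]
  · rw [left_eq_base hz, left_eq_base hw, right_eq_self hz, right_eq_self hw, dist_self, zero_add]

theorem isometry_toLp_collapse (haX : a ∈ X) (haY : a ∈ Y) (hunion : X ∪ Y = Set.univ)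
    (hinter : X ∩ Y ⊆ {a}) (hadd : ∀ x ∈ X, ∀ y ∈ Y, dist x y = dist x a + dist a y) :
    Isometry fun z => WithLp.toLp 1 (collapse X ⟨a, haX⟩ z, collapse Y ⟨a, haY⟩ z) :=
  Isometry.of_dist_eq fun z w => (withLp_one_prod_dist_eq_add _ _).trans
    (dist_collapse_add_dist_collapse haX haY hunion hinter hadd z w)

end WedgeSum

theorem stmt9 {Z : Type*} [MetricSpace Z] (X Y : Set Z) (a : Z)
    (hunion : X ∪ Y = Set.univ) (hinter : X ∩ Y = {a})
    (hadd : ∀ x ∈ X, ∀ y ∈ Y, dist x y = dist x a + dist a y)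
    (hX : IsOfNegativeType X) (hY : IsOfNegativeType Y) :
    IsOfNegativeType Z := by
  obtain ⟨haX, haY⟩ : a ∈ X ∩ Y := hinter.ge rfl
  exact (hX.withLp_one_prod hY).of_isometry
    (isometry_toLp_collapse haX haY hunion hinter.le hadd)
end

section
/- Let G be a finite tree (a connected acyclic simple graph) on a vertex set V with at least one vertex, let ℓ assign to each edge e of G a positive real length, and let d be the associated tree metric on V. Define w : V → ℝ by w(x) = Σ_{e ∋ x} 1/(1 + e^{−ℓ(e)}) − (deg(x) − 1), where the sum is over edges incident to x and deg(x) is the degree of x. Then for every x ∈ V, Σ_{y ∈ V} e^{−d(x,y)} w(y) = 1, and moreover Σ_{x ∈ V} w(x) = 1 + Σ_{e} tanh(ℓ(e)/2), the last sum being over all edges of G. -/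
open Finset Real

/-! Put `q = exp (-ℓ)`, so that the similarity `exp (-d x y)` is the product of `q` along the path
from `x` to `y`, and `w y = 1 - ∑ q e / (1 + q e)`, summed over the edges `e` at `y`. Root the tree
at `x`. The edge `e` joining `y` to its parent `z` contributes
`(exp (-d x z) + exp (-d x y)) * q e / (1 + q e)` to the part subtracted in
`∑ exp (-d x y) * w y`, which equals `exp (-d x y)` because `exp (-d x y) = exp (-d x z) * q e`.
Edges correspond to the vertices `y ≠ x`, so everything cancels except `exp (-d x x) = 1`. For
the total weight, each edge is counted from both ends, `1 - 2 q / (1 + q) = (1 - q) / (1 + q)` is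
`tanh (ℓ / 2)`, and there is one more vertex than there are edges. -/

section RootedTree

variable {V : Type*} {G : SimpleGraph V}

/-- The path from `x` to `y` in a tree. -/
noncomputable def treePath (hG : G.IsTree) (x y : V) : G.Walk x y :=
  (hG.existsUnique_path x y).choose

theorem isPath_treePath (hG : G.IsTree) (x y : V) : (treePath hG x y).IsPath :=
  (hG.existsUnique_path x y).choose_spec.1

theorem eq_treePath_of_isPath (hG : G.IsTree) {x y : V} {p : G.Walk x y} (hp : p.IsPath) :
    p = treePath hG x y :=
  (hG.existsUnique_path x y).choose_spec.2 p hp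

theorem treePath_self (hG : G.IsTree) (x : V) : treePath hG x x = .nil :=
  (eq_treePath_of_isPath hG .nil).symm

theorem treePath_eq_concat_of_mem_support (hG : G.IsTree) {x y z : V} (hadj : G.Adj z y)
    (hz : z ∈ (treePath hG x y).support) :
    treePath hG x y = (treePath hG x z).concat hadj :=
  hG.isAcyclic.path_concat (isPath_treePath hG x z) (isPath_treePath hG x y) hadj hz

/-- The parent of `y` in a tree rooted at `x`: the last vertex before `y` on the path from `x`
to `y`. The root is its own parent. -/
noncomputable def treeParent (hG : G.IsTree) (x y : V) : V :=
  (treePath hG x y).penultimate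

theorem adj_treeParent (hG : G.IsTree) {x y : V} (hy : y ≠ x) : G.Adj (treeParent hG x y) y :=
  (treePath hG x y).adj_penultimate (SimpleGraph.Walk.not_nil_of_ne hy.symm)

theorem treePath_eq_concat_treeParent (hG : G.IsTree) {x y : V} (hy : y ≠ x) :
    treePath hG x y = (treePath hG x (treeParent hG x y)).concat (adj_treeParent hG hy) :=
  treePath_eq_concat_of_mem_support hG _ ((treePath hG x y).getVert_mem_support _)

theorem length_treePath_of_ne (hG : G.IsTree) {x y : V} (hy : y ≠ x) :
    (treePath hG x y).length = (treePath hG x (treeParent hG x y)).length + 1 := by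
  conv_lhs => rw [treePath_eq_concat_treeParent hG hy, SimpleGraph.Walk.length_concat]

theorem ne_and_treeParent_eq_of_mem_support (hG : G.IsTree) {x y z : V} (hadj : G.Adj z y)
    (hz : z ∈ (treePath hG x y).support) : y ≠ x ∧ treeParent hG x y = z := by
  have hconcat := treePath_eq_concat_of_mem_support hG hadj hz
  refine ⟨?_, by rw [treeParent, hconcat, SimpleGraph.Walk.penultimate_concat]⟩
  rintro rfl
  simpa [treePath_self] using congrArg SimpleGraph.Walk.length hconcat

theorem bijOn_treeParent_edge (hG : G.IsTree) (x : V) :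
    Set.BijOn (fun y ↦ s(treeParent hG x y, y)) {x}ᶜ G.edgeSet := by
  refine ⟨fun y hy ↦ adj_treeParent hG hy, fun y hy z hz hyz ↦ ?_, ?_⟩
  · obtain ⟨-, heq⟩ | ⟨hyz, hzy⟩ := Sym2.eq_iff.mp hyz
    · exact heq
    · -- Two vertices cannot be each other's parent, since depth increases away from the root.
      have hy_len := length_treePath_of_ne hG hy
      have hz_len := length_treePath_of_ne hG hz
      rw [hyz] at hy_len
      rw [← hzy] at hz_len
      lia
  · rintro ⟨a, b⟩ (hab : G.Adj a b)
    by_cases ha : a ∈ (treePath hG x b).support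
    · obtain ⟨hb, hparent⟩ := ne_and_treeParent_eq_of_mem_support hG hab ha
      exact ⟨b, hb, congrArg (s(·, b)) hparent⟩
    · have hb : b ∈ (treePath hG x a).support :=
        hG.isAcyclic.mem_support_of_ne_mem_support_of_adj_of_isPath
          (isPath_treePath hG x a) (isPath_treePath hG x b) hab ha
      obtain ⟨ha, hparent⟩ := ne_and_treeParent_eq_of_mem_support hG hab.symm hb
      exact ⟨a, ha, (congrArg (s(·, a)) hparent).trans Sym2.eq_swap⟩

theorem sum_edgeFinset_eq_sum_treeParent [Fintype V] [DecidableEq V] [Fintype G.edgeSet]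
    {M : Type*} [AddCommMonoid M] (hG : G.IsTree) (x : V) (f : Sym2 V → M) :
    ∑ e ∈ G.edgeFinset, f e = ∑ y ∈ {x}ᶜ, f s(treeParent hG x y, y) := by
  have hbij := bijOn_treeParent_edge hG x
  refine (sum_nbij (fun y ↦ s(treeParent hG x y, y)) (fun y hy ↦ ?_) ?_ ?_ fun _ _ ↦ rfl).symm
  · exact SimpleGraph.mem_edgeFinset.mpr (hbij.mapsTo (by simpa using hy))
  · simpa using hbij.injOn
  · simpa using hbij.surjOn

end RootedTree

section PathProd

variable {V M : Type*} {G : SimpleGraph V} [Monoid M]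

/-- The product of the edge weights `q` along the path from `x` to `y` in a tree. For
`q = exp (-ℓ)` this is the similarity `exp (-d x y)` of the tree metric. -/
noncomputable def pathProd (hG : G.IsTree) (q : Sym2 V → M) (x y : V) : M :=
  ((treePath hG x y).edges.map q).prod

theorem pathProd_self (hG : G.IsTree) (q : Sym2 V → M) (x : V) : pathProd hG q x x = 1 := by
  simp [pathProd, treePath_self]

theorem pathProd_of_ne (hG : G.IsTree) (q : Sym2 V → M) {x y : V} (hy : y ≠ x) :
    pathProd hG q x y =
      pathProd hG q x (treeParent hG x y) * q s(treeParent hG x y, y) := by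
  rw [pathProd, treePath_eq_concat_treeParent hG hy]
  simp [pathProd, SimpleGraph.Walk.edges_concat]

theorem sum_toFinset_pathProd_mul_div {K : Type*} [DecidableEq V] [Field K] (hG : G.IsTree)
    (q : Sym2 V → K) {x y : V} (hy : y ≠ x) (hq : 1 + q s(treeParent hG x y, y) ≠ 0) :
    ∑ v ∈ s(treeParent hG x y, y).toFinset, pathProd hG q x v *
      (q s(treeParent hG x y, y) / (1 + q s(treeParent hG x y, y))) = pathProd hG q x y := by
  rw [Sym2.toFinset_mk_eq, sum_pair (adj_treeParent hG hy).ne, pathProd_of_ne hG q hy]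
  field_simp

end PathProd

section Weighting

variable {V K : Type*} [Fintype V] [DecidableEq V] [Field K]

theorem sum_sum_incidenceFinset {M : Type*} [AddCommMonoid M] (G : SimpleGraph V)
    [DecidableRel G.Adj] (f : V → Sym2 V → M) :
    ∑ v, ∑ e ∈ G.incidenceFinset v, f v e = ∑ e ∈ G.edgeFinset, ∑ v ∈ e.toFinset, f v e :=
  sum_comm' fun v e ↦ by simp [SimpleGraph.incidenceFinset_eq_filter, and_comm]

/-- The vertex weights `w` of the theorem, written in terms of `q = exp (-ℓ)`. On a tree they form a
weighting, in the sense of magnitude theory, of the matrix `Z = pathProd hG q`: `Z w` is constantly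
`1`. The degree is cast before subtracting, so an isolated vertex has weight `1`. -/
def graphWeighting (G : SimpleGraph V) [DecidableRel G.Adj] (q : Sym2 V → K) (x : V) : K :=
  ∑ e ∈ G.incidenceFinset x, 1 / (1 + q e) - ((G.degree x : K) - 1)

variable {G : SimpleGraph V} [DecidableRel G.Adj] {q : Sym2 V → K}

theorem graphWeighting_eq_one_sub_sum (hq : ∀ e ∈ G.edgeSet, 1 + q e ≠ 0) (x : V) :
    graphWeighting G q x = 1 - ∑ e ∈ G.incidenceFinset x, q e / (1 + q e) := by
  have hedge : ∀ e ∈ G.incidenceFinset x, 1 / (1 + q e) = 1 - q e / (1 + q e) := fun e he ↦ by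
    have := hq e ((G.mem_incidenceFinset x e).mp he).1
    field_simp
    ring
  rw [graphWeighting, sum_congr rfl hedge, sum_sub_distrib, sum_const,
    G.card_incidenceFinset_eq_degree, nsmul_one]
  ring

theorem sum_graphWeighting (hq : ∀ e ∈ G.edgeSet, 1 + q e ≠ 0) :
    ∑ x, graphWeighting G q x =
      Fintype.card V - #G.edgeFinset + ∑ e ∈ G.edgeFinset, (1 - q e) / (1 + q e) := by
  have hedge : ∀ e ∈ G.edgeFinset,
      ∑ v ∈ e.toFinset, q e / (1 + q e) = 1 - (1 - q e) / (1 + q e) := fun e he ↦ by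
    have := hq e (SimpleGraph.mem_edgeFinset.mp he)
    rw [sum_const, Sym2.card_toFinset_of_not_isDiag e (G.not_isDiag_of_mem_edgeFinset he),
      two_nsmul]
    field_simp
    ring
  simp_rw [graphWeighting_eq_one_sub_sum hq]
  rw [sum_sub_distrib, sum_sum_incidenceFinset, sum_congr rfl hedge, sum_sub_distrib]
  simp only [sum_const, nsmul_one, card_univ]
  ring

theorem sum_graphWeighting_of_isTree (hG : G.IsTree) (hq : ∀ e ∈ G.edgeSet, 1 + q e ≠ 0) :
    ∑ x, graphWeighting G q x = 1 + ∑ e ∈ G.edgeFinset, (1 - q e) / (1 + q e) := by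
  rw [sum_graphWeighting hq, ← hG.card_edgeFinset, Nat.cast_succ, add_sub_cancel_left]

theorem sum_pathProd_mul_graphWeighting (hG : G.IsTree) (hq : ∀ e ∈ G.edgeSet, 1 + q e ≠ 0)
    (x : V) : ∑ y, pathProd hG q x y * graphWeighting G q y = 1 := by
  have hcancel : ∑ y, ∑ e ∈ G.incidenceFinset y, pathProd hG q x y * (q e / (1 + q e)) =
      ∑ y ∈ {x}ᶜ, pathProd hG q x y := by
    rw [sum_sum_incidenceFinset, sum_edgeFinset_eq_sum_treeParent hG x]
    refine sum_congr rfl fun y hy ↦ ?_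
    have hyx : y ≠ x := by simpa using hy
    exact sum_toFinset_pathProd_mul_div hG q hyx (hq _ (adj_treeParent hG hyx))
  calc ∑ y, pathProd hG q x y * graphWeighting G q y
      = ∑ y, pathProd hG q x y - ∑ y ∈ {x}ᶜ, pathProd hG q x y := by
        simp_rw [graphWeighting_eq_one_sub_sum hq, mul_sub, mul_one, mul_sum]
        rw [sum_sub_distrib, hcancel]
    _ = pathProd hG q x x := by rw [← sum_add_sum_compl {x}, sum_singleton, add_sub_cancel_right]
    _ = 1 := pathProd_self hG q x

end Weighting

theorem tanh_half_eq_div_exp_neg (t : ℝ) : tanh (t / 2) = (1 - exp (-t)) / (1 + exp (-t)) := by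
  have hsq : exp (-t) = exp (-(t / 2)) * exp (-(t / 2)) := by rw [← exp_add]; ring_nf
  have hinv : exp (t / 2) * exp (-(t / 2)) = 1 := by rw [← exp_add, add_neg_cancel, exp_zero]
  rw [tanh_eq, ← mul_div_mul_right _ _ (exp_ne_zero (-(t / 2))), sub_mul, add_mul, hinv, hsq]

theorem stmt11_general {V K : Type*} [Fintype V] [DecidableEq V] [Field K]
    (G : SimpleGraph V) [DecidableRel G.Adj] (hG : G.IsTree)
    (q : Sym2 V → K) (hq : ∀ e ∈ G.edgeSet, 1 + q e ≠ 0)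
    (ζ : V → V → K)
    (hζ : ∀ (x y : V) (p : G.Walk x y), p.IsPath → ζ x y = (p.edges.map q).prod)
    (w : V → K)
    (hw : ∀ x : V, w x = (∑ e ∈ G.incidenceFinset x, 1 / (1 + q e)) - ((G.degree x : K) - 1)) :
    (∀ x : V, ∑ y : V, ζ x y * w y = 1) ∧
    ∑ x : V, w x = 1 + ∑ e ∈ G.edgeFinset, (1 - q e) / (1 + q e) := by
  obtain rfl : ζ = pathProd hG q := funext₂ fun x y ↦ hζ x y _ (isPath_treePath hG x y)
  obtain rfl : w = graphWeighting G q := funext hw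
  exact ⟨sum_pathProd_mul_graphWeighting hG hq, sum_graphWeighting_of_isTree hG hq⟩

theorem stmt11 {V : Type*} [Fintype V] [DecidableEq V] [Nonempty V]
    (G : SimpleGraph V) [DecidableRel G.Adj] (hG : G.IsTree)
    (ℓ : Sym2 V → ℝ) (hℓ : ∀ e ∈ G.edgeSet, 0 < ℓ e)
    (d : V → V → ℝ)
    (hd : ∀ (x y : V) (p : G.Walk x y), p.IsPath → d x y = (p.edges.map ℓ).sum)
    (w : V → ℝ)
    (hw : ∀ x : V, w x =
      (∑ e ∈ G.incidenceFinset x, 1 / (1 + Real.exp (-ℓ e))) - ((G.degree x : ℝ) - 1)) :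
    (∀ x : V, ∑ y : V, Real.exp (-d x y) * w y = 1) ∧
    ∑ x : V, w x = 1 + ∑ e ∈ G.edgeFinset, Real.tanh (ℓ e / 2) := by
  simpa only [tanh_half_eq_div_exp_neg] using stmt11_general G hG (fun e ↦ exp (-ℓ e))
    (fun e _ ↦ by positivity) (fun x y ↦ exp (-d x y))
    (fun x y p hp ↦ by simp [hd x y p hp, List.sum_neg, exp_list_sum, Function.comp_def]) w hw
end

section
/- Let G be a finite tree on a vertex set V with positive edge lengths ℓ and tree metric d, and let Z be the V × V matrix with entries Z(x,y) = e^{−d(x,y)}. Define the V × V matrix M by: M(x,x) = 1 + Σ_{e ∋ x} e^{−2ℓ(e)}/(1 − e^{−2ℓ(e)}) for every x ∈ V; M(x,y) = −e^{−ℓ(e)}/(1 − e^{−2ℓ(e)}) whenever x ≠ y are adjacent and e = {x,y} is the edge joining them; and M(x,y) = 0 whenever x ≠ y are not adjacent. Then M·Z is the identity matrix, i.e. M = Z⁻¹. -/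
open Finset Real

/-!
Write `q e = exp (-ℓ e)`, so that `Z x y` is the product of `q` along the path from `x` to `y`.
For any function `f` on the vertices, the row of `M` at `x` acts on `f` by
`f x + ∑ w, q (q * f x - f w) / (1 - q ^ 2)`, summed over the neighbours `w` of `x` with
`q = q s(x, w)`. Take `f w = Z w y`. A neighbour `w` off the path from `x` to `y` satisfies
`f w = q * f x` and contributes `0`. In a forest at most one neighbour lies on that path, namely its
second vertex; there `f x = q * f w`, and the contribution `-f x` cancels the leading term. Without
such a neighbour the row sum is `f x`, which is `1` when `x = y`, and `0` when `x` and `y` lie in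
different components.
-/

section Similarity

variable {V K : Type*} {G : SimpleGraph V}

section MonoidWithZero

variable [MonoidWithZero K]

open Classical in
/-- The similarity matrix `Z` of a forest `G`, in multiplicative form: the weight `q e` plays the
role of `exp (-ℓ e)`, and the entry at `(x, y)` is the product of the weights along the path from
`x` to `y`. Vertices in different components are at infinite distance, so their entry is `0`. -/
noncomputable def similarityMatrix (G : SimpleGraph V) (q : Sym2 V → K) : Matrix V V K :=
  Matrix.of fun x y ↦
    if h : G.Reachable x y then (h.exists_isPath.choose.edges.map q).prod else 0

theorem similarityMatrix_eq_zero (q : Sym2 V → K) {x y : V} (h : ¬G.Reachable x y) :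
    similarityMatrix G q x y = 0 :=
  dif_neg h

theorem similarityMatrix_eq_prod (hG : G.IsAcyclic) (q : Sym2 V → K) {x y : V} {p : G.Walk x y}
    (hp : p.IsPath) : similarityMatrix G q x y = (p.edges.map q).prod := by
  have hxy : G.Reachable x y := p.reachable
  have hunique : hxy.exists_isPath.choose = p :=
    congrArg Subtype.val <|
      (hG.subsingleton_path x y).elim ⟨_, hxy.exists_isPath.choose_spec⟩ ⟨p, hp⟩
  rw [similarityMatrix, Matrix.of_apply, dif_pos hxy, hunique]

theorem similarityMatrix_self (hG : G.IsAcyclic) (q : Sym2 V → K) (x : V) :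
    similarityMatrix G q x x = 1 := by
  simp [similarityMatrix_eq_prod hG q (SimpleGraph.Walk.IsPath.nil (u := x))]

theorem similarityMatrix_eq_mul_of_isPath_cons (hG : G.IsAcyclic) (q : Sym2 V → K) {x v y : V}
    {h : G.Adj x v} {p : G.Walk v y} (hp : (SimpleGraph.Walk.cons h p).IsPath) :
    similarityMatrix G q x y = q s(x, v) * similarityMatrix G q v y := by
  rw [similarityMatrix_eq_prod hG q hp, similarityMatrix_eq_prod hG q hp.of_cons,
    SimpleGraph.Walk.edges_cons, List.map_cons, List.prod_cons]

theorem similarityMatrix_eq_mul_of_notMem_support (hG : G.IsAcyclic) (q : Sym2 V → K) {x w y : V}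
    {p : G.Walk x y} (hp : p.IsPath) (hw : G.Adj x w) (hwp : w ∉ p.support) :
    similarityMatrix G q w y = q s(x, w) * similarityMatrix G q x y := by
  rw [similarityMatrix_eq_mul_of_isPath_cons hG q (hp.cons hwp (h := hw.symm)), Sym2.eq_swap]

end MonoidWithZero

theorem image_neighborFinset_eq_incidenceFinset [DecidableEq V] (x : V)
    [Fintype (G.neighborSet x)] :
    (G.neighborFinset x).image (s(x, ·)) = G.incidenceFinset x := by
  ext e
  simp only [mem_image, SimpleGraph.mem_neighborFinset, SimpleGraph.mem_incidenceFinset]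
  constructor
  · rintro ⟨w, hw, rfl⟩
    exact G.mk'_mem_incidenceSet_left_iff.2 hw
  · rintro ⟨he, w, rfl⟩
    exact ⟨w, he, rfl⟩

theorem sum_incidenceFinset [DecidableEq V] [AddCommMonoid K] (x : V) [Fintype (G.neighborSet x)]
    (f : Sym2 V → K) :
    ∑ e ∈ G.incidenceFinset x, f e = ∑ w ∈ G.neighborFinset x, f s(x, w) := by
  rw [← image_neighborFinset_eq_incidenceFinset,
    sum_image fun _ _ _ _ h ↦ Sym2.congr_right.1 h]

section Field

variable [DecidableEq V] [Field K] [G.LocallyFinite]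

open Classical in
/-- The matrix `M` inverse to `similarityMatrix G q`, again with the weight `q e` in place of
`exp (-ℓ e)`. It is meaningful only if `q e ^ 2 ≠ 1` on every edge, because division by zero
gives `0`. -/
noncomputable def similarityInverse (G : SimpleGraph V) [G.LocallyFinite] (q : Sym2 V → K) :
    Matrix V V K :=
  Matrix.of fun x y ↦
    if x = y then 1 + ∑ e ∈ G.incidenceFinset x, q e ^ 2 / (1 - q e ^ 2)
    else if G.Adj x y then -(q s(x, y) / (1 - q s(x, y) ^ 2)) else 0

theorem similarityInverse_self (q : Sym2 V → K) (x : V) :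
    similarityInverse G q x x = 1 + ∑ e ∈ G.incidenceFinset x, q e ^ 2 / (1 - q e ^ 2) := by
  simp [similarityInverse]

theorem similarityInverse_of_adj (q : Sym2 V → K) {x y : V} (h : G.Adj x y) :
    similarityInverse G q x y = -(q s(x, y) / (1 - q s(x, y) ^ 2)) := by
  simp [similarityInverse, h, h.ne]

theorem similarityInverse_of_not_adj (q : Sym2 V → K) {x y : V} (hne : x ≠ y)
    (h : ¬G.Adj x y) : similarityInverse G q x y = 0 := by
  simp [similarityInverse, h, hne]

theorem finsum_similarityInverse_mul (q : Sym2 V → K) (f : V → K) (x : V) :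
    ∑ᶠ w, similarityInverse G q x w * f w =
      f x + ∑ w ∈ G.neighborFinset x,
        q s(x, w) * (q s(x, w) * f x - f w) / (1 - q s(x, w) ^ 2) := by
  have hsupport : (Function.support fun w ↦ similarityInverse G q x w * f w) ⊆
      (insert x (G.neighborFinset x) : Finset V) := by
    intro w hw
    contrapose! hw
    simp only [mem_coe, mem_insert, SimpleGraph.mem_neighborFinset, not_or] at hw
    simp [similarityInverse_of_not_adj q (Ne.symm hw.1) hw.2]
  rw [finsum_eq_sum_of_support_subset _ hsupport, sum_insert (by simp), similarityInverse_self,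
    sum_incidenceFinset, add_mul, one_mul, sum_mul, add_assoc, ← sum_add_distrib]
  congr 1
  refine sum_congr rfl fun w hw ↦ ?_
  rw [similarityInverse_of_adj q ((G.mem_neighborFinset x w).1 hw)]
  ring

theorem finsum_similarityInverse_mul_eq_self {q : Sym2 V → K} {f : V → K} {x : V}
    (hf : ∀ w, G.Adj x w → f w = q s(x, w) * f x) :
    ∑ᶠ w, similarityInverse G q x w * f w = f x := by
  rw [finsum_similarityInverse_mul, sum_eq_zero, add_zero]
  intro w hw
  simp [hf w ((G.mem_neighborFinset x w).1 hw)]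

theorem finsum_similarityInverse_mul_eq_zero {q : Sym2 V → K} {f : V → K} {x v : V}
    (hv : G.Adj x v) (hq : q s(x, v) ^ 2 ≠ 1) (hfv : f x = q s(x, v) * f v)
    (hf : ∀ w, G.Adj x w → w ≠ v → f w = q s(x, w) * f x) :
    ∑ᶠ w, similarityInverse G q x w * f w = 0 := by
  rw [finsum_similarityInverse_mul, sum_eq_single_of_mem v ((G.mem_neighborFinset x v).2 hv)]
  · have hden : 1 - q s(x, v) ^ 2 ≠ 0 := sub_ne_zero.2 hq.symm
    rw [hfv]
    field_simp
    ring
  · intro w hw hwv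
    simp [hf w ((G.mem_neighborFinset x w).1 hw) hwv]

theorem stmt12_general (hG : G.IsAcyclic) {q : Sym2 V → K} (hq : ∀ e ∈ G.edgeSet, q e ^ 2 ≠ 1)
    (x y : V) :
    ∑ᶠ w, similarityInverse G q x w * similarityMatrix G q w y = (1 : Matrix V V K) x y := by
  by_cases hxy : G.Reachable x y
  · obtain ⟨p, hp⟩ := hxy.exists_isPath
    cases p with
    | nil =>
      rw [Matrix.one_apply_eq, ← similarityMatrix_self hG q x]
      exact finsum_similarityInverse_mul_eq_self fun w hw ↦
        similarityMatrix_eq_mul_of_notMem_support hG q hp hw (by simpa using hw.ne')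
    | @cons _ v _ hv p =>
      have hne : x ≠ y := fun h ↦
        ((SimpleGraph.Walk.cons_isPath_iff hv p).1 hp).2 (h ▸ p.end_mem_support)
      rw [Matrix.one_apply_ne hne]
      refine finsum_similarityInverse_mul_eq_zero hv (hq _ hv)
        (similarityMatrix_eq_mul_of_isPath_cons hG q hp) fun w hw hwv ↦ ?_
      exact similarityMatrix_eq_mul_of_notMem_support hG q hp hw fun hwp ↦
        hwv (by simpa using hG.eq_snd_of_adj_start hp hw hwp)
  · have hne : x ≠ y := fun h ↦ hxy (h ▸ .rfl)
    rw [Matrix.one_apply_ne hne, ← similarityMatrix_eq_zero q hxy]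
    refine finsum_similarityInverse_mul_eq_self fun w hw ↦ ?_
    have hwy : ¬G.Reachable w y := fun h ↦ hxy (hw.reachable.trans h)
    rw [similarityMatrix_eq_zero q hxy, similarityMatrix_eq_zero q hwy, mul_zero]

theorem similarityInverse_mul_similarityMatrix [Fintype V] (hG : G.IsAcyclic) {q : Sym2 V → K}
    (hq : ∀ e ∈ G.edgeSet, q e ^ 2 ≠ 1) :
    similarityInverse G q * similarityMatrix G q = 1 := by
  ext x y
  rw [Matrix.mul_apply, ← finsum_eq_sum_of_fintype, stmt12_general hG hq]

end Field

section Exponential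

variable {ℓ : Sym2 V → ℝ}

theorem exp_neg_two_mul (a : ℝ) : exp (-(2 * a)) = exp (-a) ^ 2 := by
  rw [← exp_nat_mul, Nat.cast_ofNat, mul_neg]

theorem of_exp_neg_eq_similarityMatrix (hG : G.IsTree) {d : V → V → ℝ}
    (hd : ∀ (x y : V) (p : G.Walk x y), p.IsPath → d x y = (p.edges.map ℓ).sum) :
    Matrix.of (fun x y ↦ exp (-d x y)) = similarityMatrix G fun e ↦ exp (-ℓ e) := by
  ext x y
  obtain ⟨p, hp⟩ := hG.connected.exists_isPath x y
  rw [similarityMatrix_eq_prod hG.isAcyclic _ hp, Matrix.of_apply, hd x y p hp, List.sum_neg,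
    exp_list_sum, List.map_map, List.map_map]
  rfl

theorem eq_similarityInverse_exp_neg [DecidableEq V] [G.LocallyFinite] {M : Matrix V V ℝ}
    (hdiag : ∀ x, M x x =
      1 + ∑ e ∈ G.incidenceFinset x, exp (-(2 * ℓ e)) / (1 - exp (-(2 * ℓ e))))
    (hadj : ∀ x y, G.Adj x y →
      M x y = -(exp (-ℓ s(x, y)) / (1 - exp (-(2 * ℓ s(x, y))))))
    (hnonadj : ∀ x y, x ≠ y → ¬G.Adj x y → M x y = 0) :
    M = similarityInverse G fun e ↦ exp (-ℓ e) := by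
  simp only [exp_neg_two_mul] at hdiag hadj
  ext x y
  rcases eq_or_ne x y with rfl | hne
  · rw [hdiag, similarityInverse_self]
  · by_cases h : G.Adj x y
    · rw [hadj x y h, similarityInverse_of_adj _ h]
    · rw [hnonadj x y hne h, similarityInverse_of_not_adj _ hne h]

theorem exp_neg_sq_ne_one {a : ℝ} (ha : a ≠ 0) : exp (-a) ^ 2 ≠ 1 := by
  simpa [← exp_neg_two_mul] using ha

end Exponential

end Similarity

theorem stmt12 {V : Type*} [Fintype V] [DecidableEq V] [Nonempty V]
    (G : SimpleGraph V) [DecidableRel G.Adj] (hG : G.IsTree)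
    (ℓ : Sym2 V → ℝ) (hℓ : ∀ e ∈ G.edgeSet, 0 < ℓ e)
    (d : V → V → ℝ)
    (hd : ∀ (x y : V) (p : G.Walk x y), p.IsPath → d x y = (p.edges.map ℓ).sum)
    (M : Matrix V V ℝ)
    (hMdiag : ∀ x : V, M x x =
      1 + ∑ e ∈ G.incidenceFinset x, Real.exp (-(2 * ℓ e)) / (1 - Real.exp (-(2 * ℓ e))))
    (hMadj : ∀ x y : V, G.Adj x y →
      M x y = -(Real.exp (-ℓ s(x, y)) / (1 - Real.exp (-(2 * ℓ s(x, y))))))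
    (hMnonadj : ∀ x y : V, x ≠ y → ¬G.Adj x y → M x y = 0) :
    M * Matrix.of (fun x y : V => Real.exp (-d x y)) = 1 := by
  rw [of_exp_neg_eq_similarityMatrix hG hd, eq_similarityInverse_exp_neg hMdiag hMadj hMnonadj]
  exact similarityInverse_mul_similarityMatrix hG.isAcyclic fun e he ↦
    exp_neg_sq_ne_one (hℓ e he).ne'
end

section
/- Let G be a finite tree on a vertex set V with positive edge lengths ℓ and tree metric d, and let μ be a diversity-maximizing probability measure on the finite metric space (V,d). (a) If a vertex x ∈ V satisfies Σ_{e ∋ x} 1/(1 + e^{−ℓ(e)}) ≤ deg(x) − 1, then μ({x}) = 0. (b) In particular, if ℓ(e) ≤ log 2 for every edge e, then μ({x}) = 0 for every vertex x with deg(x) ≥ 3. -/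
open Finset Real

/-!
Moving all the mass of a support point `x` of a minimizer `μ` to another vertex cannot decrease the
energy even to first order, so `x` minimizes the potential `p z = ∑ w, exp (-d z w) * μ w`.
Let `a` be the part of `p x` contributed by the branch behind a neighbour `y` of `x`, and put
`t = exp (-ℓ s(x, y))`. Passing from `x` to `y` divides that part by `t` and multiplies the rest by
`t`, so `p x ≤ p y = a / t + t * (p x - a)`, which rearranges to `p x * (1 - 1 / (1 + t)) ≤ a`.
The branches at `x` are disjoint and avoid `x`, so summing over the neighbours gives
`μ x ≤ p x * (∑ 1 / (1 + t) - (deg x - 1))`.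
-/

section Minimizers

theorem apply_self_le_apply_of_isMinOn {E : Type*} [AddCommGroup E] [Module ℝ E]
    {B : LinearMap.BilinForm ℝ E} (hB : B.IsSymm) {s : Set E} {u v : E} (hs : StarConvex ℝ u s)
    (hmin : IsMinOn (fun w ↦ B w w) s u) (hv : v ∈ s) : B u u ≤ B v u := by
  have quadratic_nonneg : ∀ r ∈ Set.Ioc (0 : ℝ) 1,
      0 ≤ 2 * (B v u - B u u) + r * B (v - u) (v - u) := by
    rintro r ⟨hr0, hr1⟩
    have h : B u u ≤ B (u + r • (v - u)) (u + r • (v - u)) :=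
      hmin (hs.add_smul_sub_mem hv hr0.le hr1)
    refine nonneg_of_mul_nonneg_right (a := r) ?_ hr0
    simp only [map_add, map_sub, map_smul, LinearMap.add_apply, LinearMap.sub_apply,
      LinearMap.smul_apply, smul_eq_mul, hB.eq u v] at h ⊢
    linarith
  have tendsto_linear : Filter.Tendsto (fun r : ℝ ↦ 2 * (B v u - B u u) + r * B (v - u) (v - u))
      (nhdsWithin 0 (Set.Ioi 0)) (nhds (2 * (B v u - B u u))) :=
    (Continuous.tendsto' (by fun_prop) _ _ (by simp)).mono_left nhdsWithin_le_nhds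
  have := ge_of_tendsto tendsto_linear <|
    Filter.mem_of_superset (Ioc_mem_nhdsGT one_pos) quadratic_nonneg
  linarith

variable {ι : Type*} [Fintype ι] [DecidableEq ι]

theorem sub_single_add_single_mem_stdSimplex {𝕜 : Type*} [Ring 𝕜] [PartialOrder 𝕜]
    [IsOrderedAddMonoid 𝕜] {f : ι → 𝕜} (hf : f ∈ stdSimplex 𝕜 ι) (i j : ι) :
    f - Pi.single i (f i) + Pi.single j (f i) ∈ stdSimplex 𝕜 ι := by
  refine ⟨fun k ↦ add_nonneg ?_ ?_, by simp [sum_add_distrib, hf.2]⟩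
  · obtain rfl | hk := eq_or_ne k i
    · simp
    · simpa [hk] using hf.1 k
  · exact (Pi.single_nonneg (α := fun _ ↦ 𝕜)).2 (hf.1 i) k

theorem mulVec_le_mulVec_of_isMinOn {K : Matrix ι ι ℝ} (hK : K.IsSymm) {μ : ι → ℝ}
    (hμ : μ ∈ stdSimplex ℝ ι) (hmin : IsMinOn (fun ν ↦ K.toBilin' ν ν) (stdSimplex ℝ ι) μ)
    {i : ι} (hi : 0 < μ i) (j : ι) : K.mulVec μ i ≤ K.mulVec μ j := by
  have h := apply_self_le_apply_of_isMinOn (Matrix.isSymm_toBilin'_iff_isSymm.2 hK)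
    ((convex_stdSimplex ℝ ι).starConvex hμ) hmin (sub_single_add_single_mem_stdSimplex hμ i j)
  simp only [Matrix.toBilin'_apply', add_dotProduct, sub_dotProduct, single_dotProduct] at h
  exact le_of_mul_le_mul_left (by linarith) hi

end Minimizers

section Branches

variable {V : Type*} {G : SimpleGraph V} {x y y' z : V}

/-- The branch of `G` at `x` behind `y`: the vertices that a path from `y` can reach without
meeting `x`. In a tree, the branches behind the neighbours of `x` are the components of `G - x`. -/
noncomputable def branch [Fintype V] (G : SimpleGraph V) (x y : V) : Finset V :=
  open Classical in {z | ∃ p : G.Walk y z, p.IsPath ∧ x ∉ p.support}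

/-- `d` measures the `ℓ`-length of every path of `G`; if `G` is a tree, this says that `d` is the
tree metric with edge lengths `ℓ`. -/
def IsTreeMetric (G : SimpleGraph V) (ℓ : Sym2 V → ℝ) (d : V → V → ℝ) : Prop :=
  ∀ (x y : V) (p : G.Walk x y), p.IsPath → d x y = (p.edges.map ℓ).sum

namespace IsTreeMetric

variable {ℓ : Sym2 V → ℝ} {d : V → V → ℝ}

theorem self (hd : IsTreeMetric G ℓ d) (x : V) : d x x = 0 := by
  simpa using hd x x .nil .nil

theorem comm (hd : IsTreeMetric G ℓ d) (hG : G.Preconnected) (x y : V) : d x y = d y x := by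
  obtain ⟨p, hp⟩ := hG.exists_isPath x y
  simp [hd x y p hp, hd y x p.reverse hp.reverse]

end IsTreeMetric

variable [Fintype V]

theorem mem_branch : z ∈ branch G x y ↔ ∃ p : G.Walk y z, p.IsPath ∧ x ∉ p.support := by
  simp [branch]

theorem self_notMem_branch (G : SimpleGraph V) (x y : V) : x ∉ branch G x y := by
  rw [mem_branch]
  rintro ⟨p, -, hx⟩
  exact hx p.end_mem_support

theorem mem_branch_swap_of_notMem (hG : G.Preconnected) (hxy : x ≠ y) (hz : z ∉ branch G x y) :
    z ∈ branch G y x := by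
  classical
  obtain ⟨p, hp⟩ := hG.exists_isPath y z
  have hx : x ∈ p.support := by
    by_contra hx
    exact hz (mem_branch.2 ⟨p, hp, hx⟩)
  have hsplit : ((p.takeUntil x hx).append (p.dropUntil x hx)).IsPath := by
    rwa [p.take_spec hx]
  refine mem_branch.2 ⟨p.dropUntil x hx, hp.dropUntil hx, fun hy ↦ ?_⟩
  exact hsplit.ne_of_mem_support_of_append hxy.symm (p.takeUntil x hx).start_mem_support hy rfl

theorem eq_of_mem_branch_of_mem_branch (hG : G.IsAcyclic) (hy : G.Adj x y) (hy' : G.Adj x y')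
    (hz : z ∈ branch G x y) (hz' : z ∈ branch G x y') : y = y' := by
  obtain ⟨p, hp, hxp⟩ := mem_branch.1 hz
  obtain ⟨q, hq, hxq⟩ := mem_branch.1 hz'
  have same_path : (⟨_, hp.cons hxp (h := hy)⟩ : G.Path x z) = ⟨_, hq.cons hxq (h := hy')⟩ :=
    (hG.subsingleton_path x z).elim _ _
  simpa using congrArg (fun r : G.Path x z ↦ r.1.snd) same_path

theorem IsTreeMetric.eq_add_of_mem_branch {ℓ : Sym2 V → ℝ} {d : V → V → ℝ}
    (hd : IsTreeMetric G ℓ d) (hxy : G.Adj x y) (hz : z ∈ branch G x y) :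
    d x z = ℓ s(x, y) + d y z := by
  obtain ⟨p, hp, hx⟩ := mem_branch.1 hz
  simp [hd x z _ (hp.cons hx (h := hxy)), hd y z p hp]

end Branches

section Potential

variable {V : Type*} {G : SimpleGraph V} {ℓ : Sym2 V → ℝ} {d : V → V → ℝ} {μ : V → ℝ} {x y : V}

/-- The similarity matrix of `d`, i.e. the matrix of the form `⟨·,·⟩_W`. -/
noncomputable def similarity (d : V → V → ℝ) : Matrix V V ℝ :=
  .of fun x y ↦ exp (-d x y)

theorem IsTreeMetric.isSymm_similarity (hd : IsTreeMetric G ℓ d) (hG : G.Preconnected) :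
    (similarity d).IsSymm :=
  Matrix.IsSymm.ext fun x y ↦ by simp [similarity, hd.comm hG x y]

variable [Fintype V]

/-- The part of the potential `(similarity d).mulVec μ x` contributed by the branch at `x`
behind `y`. -/
noncomputable def branchPotential (G : SimpleGraph V) (d : V → V → ℝ) (μ : V → ℝ) (x y : V) : ℝ :=
  ∑ z ∈ branch G x y, exp (-d x z) * μ z

theorem similarity_mulVec_apply (d : V → V → ℝ) (μ : V → ℝ) (x : V) :
    (similarity d).mulVec μ x = ∑ z, exp (-d x z) * μ z := rfl

theorem IsTreeMetric.mulVec_eq_of_adj (hd : IsTreeMetric G ℓ d) (hG : G.Preconnected)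
    (μ : V → ℝ) (hxy : G.Adj x y) :
    (similarity d).mulVec μ y = branchPotential G d μ x y / exp (-ℓ s(x, y)) +
      exp (-ℓ s(x, y)) * ((similarity d).mulVec μ x - branchPotential G d μ x y) := by
  classical
  have near : ∑ z ∈ branch G x y, exp (-d y z) * μ z =
      branchPotential G d μ x y / exp (-ℓ s(x, y)) := by
    rw [branchPotential, sum_div]
    refine sum_congr rfl fun z hz ↦ ?_
    rw [hd.eq_add_of_mem_branch hxy hz, neg_add, exp_add]
    field_simp
  have far : ∑ z ∈ (branch G x y)ᶜ, exp (-d y z) * μ z =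
      exp (-ℓ s(x, y)) * ((similarity d).mulVec μ x - branchPotential G d μ x y) := by
    rw [similarity_mulVec_apply, branchPotential, ← sum_add_sum_compl (branch G x y),
      add_sub_cancel_left, mul_sum]
    refine sum_congr rfl fun z hz ↦ ?_
    have hz' : z ∈ branch G y x := mem_branch_swap_of_notMem hG hxy.ne (mem_compl.1 hz)
    rw [hd.eq_add_of_mem_branch hxy.symm hz', Sym2.eq_swap, neg_add, exp_add, mul_assoc]
  rw [similarity_mulVec_apply, ← sum_add_sum_compl (branch G x y), near, far]

theorem mul_one_sub_one_div_one_add_le {t a c : ℝ} (ht0 : 0 < t) (ht1 : t < 1)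
    (h : c ≤ a / t + t * (c - a)) : c * (1 - 1 / (1 + t)) ≤ a := by
  have cleared : c * t ≤ a * (1 + t) := by
    have hmul : c * t ≤ a + t ^ 2 * (c - a) := by
      calc c * t ≤ (a / t + t * (c - a)) * t := mul_le_mul_of_nonneg_right h ht0.le
        _ = a + t ^ 2 * (c - a) := by field_simp
    refine le_of_mul_le_mul_right ?_ (sub_pos.2 ht1)
    linarith
  calc c * (1 - 1 / (1 + t)) = c * t / (1 + t) := by field_simp; ring
    _ ≤ a := (div_le_iff₀ (by linarith)).2 cleared

theorem IsTreeMetric.mul_le_branchPotential (hd : IsTreeMetric G ℓ d) (hG : G.Preconnected)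
    (hxy : G.Adj x y) (hℓ : 0 < ℓ s(x, y))
    (hle : (similarity d).mulVec μ x ≤ (similarity d).mulVec μ y) :
    (similarity d).mulVec μ x * (1 - 1 / (1 + exp (-ℓ s(x, y)))) ≤ branchPotential G d μ x y :=
  mul_one_sub_one_div_one_add_le (exp_pos _) (exp_lt_one_iff.2 (neg_neg_of_pos hℓ))
    (hle.trans_eq (hd.mulVec_eq_of_adj hG μ hxy))

theorem add_sum_branchPotential_le [Fintype (G.neighborSet x)] (hG : G.IsAcyclic)
    (hx : d x x = 0) (hμ : 0 ≤ μ) :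
    μ x + ∑ y ∈ G.neighborFinset x, branchPotential G d μ x y ≤ (similarity d).mulVec μ x := by
  classical
  have disjoint_branches : (G.neighborFinset x : Set V).PairwiseDisjoint (branch G x) := by
    intro y hy y' hy' hne
    refine disjoint_left.2 fun z hz hz' ↦ hne ?_
    exact eq_of_mem_branch_of_mem_branch hG (by simpa using hy) (by simpa using hy') hz hz'
  have notMem_branches : x ∉ (G.neighborFinset x).biUnion (branch G x) := by
    simp [self_notMem_branch]
  calc μ x + ∑ y ∈ G.neighborFinset x, branchPotential G d μ x y
      = ∑ z ∈ insert x ((G.neighborFinset x).biUnion (branch G x)), exp (-d x z) * μ z := by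
        simp only [sum_insert notMem_branches, sum_biUnion disjoint_branches, hx, neg_zero,
          exp_zero, one_mul, branchPotential]
    _ ≤ ∑ z, exp (-d x z) * μ z :=
        sum_le_univ_sum_of_nonneg fun z ↦ mul_nonneg (exp_pos _).le (hμ z)
    _ = (similarity d).mulVec μ x := (similarity_mulVec_apply d μ x).symm

end Potential

section Vertex

variable {V : Type*} [DecidableEq V] {G : SimpleGraph V} {x : V} [Fintype (G.neighborSet x)]
  {ℓ : Sym2 V → ℝ}

theorem sum_incidenceFinset_eq_sum_neighborFinset {M : Type*} [AddCommMonoid M] (f : Sym2 V → M) :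
    ∑ e ∈ G.incidenceFinset x, f e = ∑ y ∈ G.neighborFinset x, f s(x, y) := by
  have h : G.incidenceFinset x = (G.neighborFinset x).map (Sym2.mkEmbedding x) := by
    ext e
    constructor
    · intro he
      rw [SimpleGraph.mem_incidenceFinset] at he
      obtain ⟨y, rfl⟩ := Sym2.mem_iff_exists.1 he.2
      exact mem_map.2 ⟨y, by simpa using he.1, rfl⟩
    · simp only [mem_map, SimpleGraph.mem_neighborFinset, SimpleGraph.mem_incidenceFinset]
      rintro ⟨y, hy, rfl⟩
      exact G.mk'_mem_incidenceSet_left_iff.2 hy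
  simp [h]

theorem IsTreeMetric.apply_le_mulVec_mul [Fintype V] {d : V → V → ℝ} {μ : V → ℝ}
    (hd : IsTreeMetric G ℓ d) (hG : G.IsTree) (hℓ : ∀ e ∈ G.incidenceFinset x, 0 < ℓ e)
    (hμ : 0 ≤ μ)
    (hle : ∀ y, G.Adj x y → (similarity d).mulVec μ x ≤ (similarity d).mulVec μ y) :
    μ x ≤ (similarity d).mulVec μ x *
      (∑ e ∈ G.incidenceFinset x, 1 / (1 + exp (-ℓ e)) - (G.degree x - 1)) := by
  set c := (similarity d).mulVec μ x
  have branches : ∑ y ∈ G.neighborFinset x, c * (1 - 1 / (1 + exp (-ℓ s(x, y)))) ≤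
      ∑ y ∈ G.neighborFinset x, branchPotential G d μ x y := by
    refine sum_le_sum fun y hy ↦ ?_
    have hxy : G.Adj x y := by simpa using hy
    exact hd.mul_le_branchPotential hG.connected.preconnected hxy
      (hℓ _ (by simpa [SimpleGraph.mk'_mem_incidenceSet_left_iff] using hxy)) (hle y hxy)
  have total := add_sum_branchPotential_le hG.isAcyclic (hd.self x) hμ
  rw [← mul_sum, sum_sub_distrib, sum_const, SimpleGraph.card_neighborFinset_eq_degree,
    nsmul_one] at branches
  rw [sum_incidenceFinset_eq_sum_neighborFinset]
  linarith

theorem sum_one_div_le_degree_sub_one (hℓ : ∀ e ∈ G.incidenceFinset x, ℓ e ≤ log 2)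
    (hx : 3 ≤ G.degree x) :
    ∑ e ∈ G.incidenceFinset x, 1 / (1 + exp (-ℓ e)) ≤ (G.degree x : ℝ) - 1 := by
  have term_le : ∀ e ∈ G.incidenceFinset x, 1 / (1 + exp (-ℓ e)) ≤ 2 / 3 := by
    intro e he
    have half_le : 1 / 2 ≤ exp (-ℓ e) := by
      simpa [exp_neg, exp_log] using exp_le_exp.2 (neg_le_neg (hℓ e he))
    rw [div_le_div_iff₀ (by positivity) (by norm_num)]
    linarith
  have hx' : (3 : ℝ) ≤ G.degree x := by exact_mod_cast hx
  calc ∑ e ∈ G.incidenceFinset x, 1 / (1 + exp (-ℓ e)) ≤ G.degree x * (2 / 3) := by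
        simpa using sum_le_card_nsmul _ _ _ term_le
    _ ≤ G.degree x - 1 := by linarith

end Vertex

theorem stmt13_general {V : Type*} [Fintype V] [DecidableEq V]
    (G : SimpleGraph V) [DecidableRel G.Adj] (hG : G.IsTree)
    (ℓ : Sym2 V → ℝ) (d : V → V → ℝ) (hd : IsTreeMetric G ℓ d)
    (μ : V → ℝ) (hμ0 : ∀ x, 0 ≤ μ x) (hμ1 : ∑ x, μ x = 1)
    (hμmax : ∀ ν : V → ℝ, (∀ x, 0 ≤ ν x) → ∑ x, ν x = 1 →
      ∑ x, ∑ y, Real.exp (-d x y) * μ x * μ y ≤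
        ∑ x, ∑ y, Real.exp (-d x y) * ν x * ν y)
    (x : V) (hℓ : ∀ e ∈ G.incidenceFinset x, 0 < ℓ e) :
    ((∑ e ∈ G.incidenceFinset x, 1 / (1 + Real.exp (-ℓ e))) ≤ (G.degree x : ℝ) - 1 → μ x = 0) ∧
    ((∀ e ∈ G.incidenceFinset x, ℓ e ≤ Real.log 2) → 3 ≤ G.degree x → μ x = 0) := by
  have hmin : IsMinOn (fun ν ↦ (similarity d).toBilin' ν ν) (stdSimplex ℝ V) μ := fun ν hν ↦ by
    simpa [Matrix.toBilin'_apply, similarity, mul_comm (μ _), mul_comm (ν _)] using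
      hμmax ν hν.1 hν.2
  have criterion (hx : ∑ e ∈ G.incidenceFinset x, 1 / (1 + Real.exp (-ℓ e)) ≤
      (G.degree x : ℝ) - 1) : μ x = 0 := by
    by_contra hne
    have hpos : 0 < μ x := (hμ0 x).lt_of_ne' hne
    refine hpos.not_ge ((hd.apply_le_mulVec_mul hG hℓ hμ0 fun y _ ↦ mulVec_le_mulVec_of_isMinOn
      (hd.isSymm_similarity hG.connected.preconnected) ⟨hμ0, hμ1⟩ hmin hpos y).trans ?_)
    refine mul_nonpos_of_nonneg_of_nonpos ?_ (sub_nonpos.2 hx)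
    exact sum_nonneg fun z _ ↦ mul_nonneg (exp_pos _).le (hμ0 z)
  exact ⟨criterion, fun hlog hx ↦ criterion (sum_one_div_le_degree_sub_one hlog hx)⟩

theorem stmt13 {V : Type*} [Fintype V] [DecidableEq V] [Nonempty V]
    (G : SimpleGraph V) [DecidableRel G.Adj] (hG : G.IsTree)
    (ℓ : Sym2 V → ℝ) (hℓ : ∀ e ∈ G.edgeSet, 0 < ℓ e)
    (d : V → V → ℝ)
    (hd : ∀ (x y : V) (p : G.Walk x y), p.IsPath → d x y = (p.edges.map ℓ).sum)
    (μ : V → ℝ) (hμ0 : ∀ x, 0 ≤ μ x) (hμ1 : ∑ x, μ x = 1)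
    (hμmax : ∀ ν : V → ℝ, (∀ x, 0 ≤ ν x) → ∑ x, ν x = 1 →
      ∑ x, ∑ y, Real.exp (-d x y) * μ x * μ y ≤
        ∑ x, ∑ y, Real.exp (-d x y) * ν x * ν y) :
    -- (a)
    (∀ x : V, (∑ e ∈ G.incidenceFinset x, 1 / (1 + Real.exp (-ℓ e))) ≤ (G.degree x : ℝ) - 1 →
      μ x = 0) ∧
    -- (b)
    ((∀ e ∈ G.edgeSet, ℓ e ≤ Real.log 2) → ∀ x : V, 3 ≤ G.degree x → μ x = 0) := by
  have h (x : V) := stmt13_general G hG ℓ d hd μ hμ0 hμ1 hμmax x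
    fun e he ↦ hℓ e (G.mem_incidenceFinset x e |>.1 he).1
  exact ⟨fun x ↦ (h x).1, fun hlog x ↦ (h x).2
    fun e he ↦ hlog e (G.mem_incidenceFinset x e |>.1 he).1⟩
end

section
/- Let X be an ℝ-tree. Then Sk(X) = X \ Leaves(X): a point p ∈ X lies on some open geodesic segment ]x,y[ with x, y ∈ X if and only if X \ {p} is not preconnected (i.e. p is not a leaf). -/
/-- `S` is a geodesic segment from `x` to `y`: the image of an isometric embedding
`γ : [0, d(x,y)] → X` with `γ 0 = x` and `γ (d(x,y)) = y`. -/
def IsGeodesicSegment {X : Type*} [MetricSpace X] (x y : X) (S : Set X) : Prop :=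
  ∃ γ : ℝ → X, γ 0 = x ∧ γ (dist x y) = y ∧
    (∀ s ∈ Set.Icc (0 : ℝ) (dist x y), ∀ t ∈ Set.Icc (0 : ℝ) (dist x y),
      dist (γ s) (γ t) = |s - t|) ∧
    S = γ '' Set.Icc (0 : ℝ) (dist x y)

/-!
Fix `x` and consider the property `p ∈ [x, z]` of a point `z ≠ p`. If `d(z, w) < d(z, p)`, then
`[z, w]` and `[w, z]` miss `p`, so by the tree condition `z` and `w` both have the property or both
lack it: the property is locally constant on `X \ {p}`. If moreover `p ∈ ]x, y[`, it fails at `x`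
and holds at `y`, so `X \ {p}` is not preconnected. Conversely, if no open segment contains `p`,
then `X \ {p}` contains the segment between any two of its points, hence is preconnected.
-/

section GeodesicSegment

variable {X : Type*} [MetricSpace X] {x y q : X} {S : Set X}

namespace IsGeodesicSegment

theorem left_mem (h : IsGeodesicSegment x y S) : x ∈ S := by
  obtain ⟨γ, hγ₀, -, -, rfl⟩ := h
  exact ⟨0, Set.left_mem_Icc.2 dist_nonneg, hγ₀⟩

theorem right_mem (h : IsGeodesicSegment x y S) : y ∈ S := by
  obtain ⟨γ, -, hγ₁, -, rfl⟩ := h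
  exact ⟨dist x y, Set.right_mem_Icc.2 dist_nonneg, hγ₁⟩

theorem dist_add_dist (h : IsGeodesicSegment x y S) (hq : q ∈ S) :
    dist x q + dist q y = dist x y := by
  obtain ⟨γ, hγ₀, hγ₁, hiso, rfl⟩ := h
  obtain ⟨t, ht, rfl⟩ := hq
  have hleft : dist x (γ t) = t := by
    simpa only [hγ₀, zero_sub, abs_neg, abs_of_nonneg ht.1] using
      hiso 0 (Set.left_mem_Icc.2 dist_nonneg) t ht
  have hright : dist (γ t) y = dist x y - t := by
    simpa only [hγ₁, abs_sub_comm t, abs_of_nonneg (sub_nonneg.2 ht.2)] using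
      hiso t ht (dist x y) (Set.right_mem_Icc.2 dist_nonneg)
  rw [hleft, hright, add_sub_cancel]

theorem dist_left_le (h : IsGeodesicSegment x y S) (hq : q ∈ S) : dist x q ≤ dist x y :=
  (le_add_of_nonneg_right dist_nonneg).trans_eq (h.dist_add_dist hq)

theorem dist_right_le (h : IsGeodesicSegment x y S) (hq : q ∈ S) : dist q y ≤ dist x y :=
  (le_add_of_nonneg_left dist_nonneg).trans_eq (h.dist_add_dist hq)

theorem eq_of_mem_self (h : IsGeodesicSegment x x S) (hq : q ∈ S) : q = x :=
  (dist_le_zero.1 <| (h.dist_left_le hq).trans_eq (dist_self x)).symm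

theorem isPreconnected (h : IsGeodesicSegment x y S) : IsPreconnected S := by
  obtain ⟨γ, -, -, hiso, rfl⟩ := h
  have hlip : LipschitzOnWith 1 γ (Set.Icc 0 (dist x y)) :=
    LipschitzOnWith.of_dist_le_mul fun s hs t ht => by
      rw [hiso s hs t ht, Real.dist_eq, NNReal.coe_one, one_mul]
  exact isPreconnected_Icc.image γ hlip.continuousOn

end IsGeodesicSegment

end GeodesicSegment

section SegmentFamily

variable {X : Type*} [MetricSpace X] {seg : X → X → Set X} {p x y : X}

theorem isPreconnected_of_forall_seg_subset (hseg : ∀ x y : X, IsGeodesicSegment x y (seg x y))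
    {C : Set X} (hC : ∀ x ∈ C, ∀ y ∈ C, seg x y ⊆ C) : IsPreconnected C :=
  isPreconnected_of_forall_pair fun x hx y hy =>
    ⟨seg x y, hC x hx y hy, (hseg x y).left_mem, (hseg x y).right_mem, (hseg x y).isPreconnected⟩

theorem mem_seg_iff_of_dist_lt (hseg : ∀ x y : X, IsGeodesicSegment x y (seg x y))
    (htree : ∀ x y z : X, seg x z ⊆ seg x y ∪ seg y z) {z w : X} (hzw : dist z w < dist z p) :
    p ∈ seg x w ↔ p ∈ seg x z := by
  have hp_zw : p ∉ seg z w := fun hp => hzw.not_ge ((hseg z w).dist_left_le hp)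
  have hp_wz : p ∉ seg w z := fun hp => by
    rw [dist_comm z w, dist_comm z p] at hzw
    exact hzw.not_ge ((hseg w z).dist_right_le hp)
  exact ⟨fun hp => (htree x z w hp).resolve_right hp_zw,
    fun hp => (htree x w z hp).resolve_right hp_wz⟩

theorem isLocallyConstant_mem_seg (hseg : ∀ x y : X, IsGeodesicSegment x y (seg x y))
    (htree : ∀ x y z : X, seg x z ⊆ seg x y ∪ seg y z) (p x : X) :
    IsLocallyConstant fun z : ({p}ᶜ : Set X) => p ∈ seg x z := by
  refine (IsLocallyConstant.iff_eventually_eq _).2 fun z => ?_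
  filter_upwards [Metric.ball_mem_nhds z (dist_pos.2 z.2)] with w hw
  exact propext (mem_seg_iff_of_dist_lt hseg htree (Metric.mem_ball'.1 hw))

theorem not_isPreconnected_compl_singleton_of_mem_seg
    (hseg : ∀ x y : X, IsGeodesicSegment x y (seg x y))
    (htree : ∀ x y z : X, seg x z ⊆ seg x y ∪ seg y z)
    (hp : p ∈ seg x y) (hpx : p ≠ x) (hpy : p ≠ y) : ¬ IsPreconnected ({p}ᶜ : Set X) := by
  intro hconn
  have : PreconnectedSpace ({p}ᶜ : Set X) := Subtype.preconnectedSpace hconn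
  have hxy : (p ∈ seg x x) = (p ∈ seg x y) :=
    (isLocallyConstant_mem_seg hseg htree p x).apply_eq_of_preconnectedSpace
      ⟨x, hpx.symm⟩ ⟨y, hpy.symm⟩
  exact hpx ((hseg x x).eq_of_mem_self (hxy.mpr hp))

end SegmentFamily

theorem stmt17 {X : Type*} [MetricSpace X]
    (seg : X → X → Set X)
    (hseg : ∀ x y : X, IsGeodesicSegment x y (seg x y))
    (huniq : ∀ (x y : X) (S : Set X), IsGeodesicSegment x y S → S = seg x y)
    (htree : ∀ x y z : X, seg x z ⊆ seg x y ∪ seg y z)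
    (p : X) :
    (∃ x y : X, p ∈ seg x y \ {x, y}) ↔ ¬ IsPreconnected ({p}ᶜ : Set X) := by
  constructor
  · rintro ⟨x, y, hp, hpxy⟩
    obtain ⟨hpx, hpy⟩ : p ≠ x ∧ p ≠ y := not_or.1 hpxy
    exact not_isPreconnected_compl_singleton_of_mem_seg hseg htree hp hpx hpy
  · contrapose!
    intro hskel
    refine isPreconnected_of_forall_seg_subset hseg fun x hx y hy => ?_
    have hp : p ∉ seg x y := fun hp => hskel x y ⟨hp, not_or.2 ⟨Ne.symm hx, Ne.symm hy⟩⟩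
    exact Set.subset_compl_singleton_iff.2 hp
end
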